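/- arXiv:1610.06878 — 2 statements merged into one kernel-verified Lean document; each statement's English description precedes it below -/
import Mathlib

section
/- Let δ21 = X² + 2X + 2, δ22 = X² + 2, and δ81 = X⁸ + 4X⁷ + 6X⁶ + 4X⁵ + 2X⁴ + 8X³ + 24X² + 32X + 16. For n ≥ 5, let K be a finite field with 2^n elements, and for a ∈ K define the binary Kloosterman sum 𝒦(a) = 1 + Σ_{x ∈ K, x ≠ 0} (−1)^{τ(x⁻¹ + a·x)} ∈ ℤ, where τ(y) ∈ {0,1} ⊆ ℤ is 1 if T_1(y) = 1 and 0 if T_1(y) = 0. Then the number of a ∈ K with 𝒦(a) ≡ 0 (mod 32) equals 2^{n−3} − (1/8)·(ρ_n(δ21) + 2ρ_n(δ22) + ρ_n(δ81)), as complex numbers. -/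
open Polynomial
open scoped Classical

/-- For a finite field `K` with `2^n` elements, the `k`-th trace function
`T_k(a) = Σ_S ∏_{i ∈ S} a^(2^i)`, the sum over all `k`-element subsets `S` of `{0,…,n-1}`.
`T_1` is the absolute trace to `F_2`. -/
noncomputable def traceFn (q n k : ℕ) {K : Type*} [CommRing K] (a : K) : K :=
  ∑ S ∈ Finset.powersetCard k (Finset.range n), ∏ i ∈ S, a ^ (q ^ i)

/-- `ρ_n(γ)`: the sum of the `n`-th powers of the complex roots of `γ ∈ ℤ[X]`,
counted with multiplicity. -/
noncomputable def rho (n : ℕ) (γ : Polynomial ℤ) : ℂ :=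
  ((γ.map (Int.castRingHom ℂ)).roots.map (· ^ n)).sum

/-- The binary Kloosterman sum
`𝒦(a) = 1 + Σ_{x ∈ K, x ≠ 0} (−1)^{τ(x⁻¹ + a·x)}`, where `τ(y) ∈ {0,1} ⊆ ℤ` is `1` if
`T_1(y) = 1` and `0` if `T_1(y) = 0`. -/
noncomputable def kloosterman (n : ℕ) (K : Type) [Field K] [Fintype K] (a : K) : ℤ :=
  1 + ∑ x ∈ Finset.univ.filter (fun x : K => x ≠ 0),
        (-1 : ℤ) ^ (if traceFn 2 n 1 (x⁻¹ + a * x) = 1 then 1 else 0)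

noncomputable def d21 : Polynomial ℤ := X ^ 2 + 2 * X + 2
noncomputable def d22 : Polynomial ℤ := X ^ 2 + 2
noncomputable def d81 : Polynomial ℤ :=
  X ^ 8 + 4 * X ^ 7 + 6 * X ^ 6 + 4 * X ^ 5 + 2 * X ^ 4 + 8 * X ^ 3 + 24 * X ^ 2 + 32 * X + 16

noncomputable def trS (n : ℕ) {K : Type} [Field K] (a : K) : K := ∑ i ∈ Finset.range n, a ^ (2 ^ i)

lemma two_eq_zero' {K : Type} [Field K] [CharP K 2] : (2 : K) = 0 := by
  have := CharP.cast_eq_zero K 2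
  exact_mod_cast this

lemma sq_add {K : Type} [Field K] [CharP K 2] (x y : K) : (x + y) ^ 2 = x ^ 2 + y ^ 2 :=
  add_pow_char x y 2

lemma trS_add (n : ℕ) {K : Type} [Field K] [CharP K 2] (x y : K) :
    trS n (x + y) = trS n x + trS n y := by
  unfold trS
  rw [← Finset.sum_add_distrib]
  exact Finset.sum_congr rfl fun i _ => add_pow_char_pow x y 2 i

lemma trS_sq {n : ℕ} {K : Type} [Field K] [Fintype K] [CharP K 2] (hK : Fintype.card K = 2 ^ n)
    (x : K) : trS n (x ^ 2) = trS n x := by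
  unfold trS
  have h1 : ∀ i, (x ^ 2) ^ (2 ^ i) = x ^ (2 ^ (i + 1)) := fun i => by
    rw [← pow_mul, pow_succ, mul_comm]
  simp_rw [h1]
  have h2 := Finset.sum_range_succ' (fun i => x ^ (2 ^ i)) n
  have h3 := Finset.sum_range_succ (fun i => x ^ (2 ^ i)) n
  have h4 : x ^ (2 ^ n) = x := by rw [← hK]; exact FiniteField.pow_card x
  rw [h3, h4] at h2
  simp only [pow_zero, pow_one] at h2
  exact (add_right_cancel h2).symm

lemma trS_pow {n : ℕ} {K : Type} [Field K] [CharP K 2]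
    (x : K) : (trS n x) ^ 2 = trS n (x ^ 2) := by
  unfold trS
  rw [sum_pow_char]
  exact Finset.sum_congr rfl fun i _ => by rw [← pow_mul, ← pow_mul, mul_comm]

lemma trS_zero_or_one {n : ℕ} {K : Type} [Field K] [Fintype K] [CharP K 2]
    (hK : Fintype.card K = 2 ^ n) (x : K) : trS n x = 0 ∨ trS n x = 1 := by
  have h : (trS n x) ^ 2 = trS n x := by rw [trS_pow, trS_sq hK]
  have : trS n x * (trS n x - 1) = 0 := by linear_combination h
  rcases mul_eq_zero.mp this with h | h
  · exact Or.inl h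
  · exact Or.inr (sub_eq_zero.mp h)

lemma exists_trS_one {n : ℕ} {K : Type} [Field K] [Fintype K] [CharP K 2]
    (hK : Fintype.card K = 2 ^ n) : ∃ x : K, trS n x = 1 := by
  let _ : Algebra (ZMod 2) K := ZMod.algebra K 2
  obtain ⟨x, hx⟩ := Algebra.trace_surjective (ZMod 2) K 1
  refine ⟨x, ?_⟩
  have h := FiniteField.algebraMap_trace_eq_sum_pow (ZMod 2) K x
  have hf : Module.finrank (ZMod 2) K = n := by
    have := Module.card_eq_pow_finrank (K := ZMod 2) (V := K)
    rw [hK, ZMod.card] at this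
    exact (Nat.pow_right_injective le_rfl this).symm
  rw [hx, map_one, hf] at h
  simp only [Nat.card_zmod] at h
  exact h.symm

lemma AS_iff {n : ℕ} {K : Type} [Field K] [Fintype K] [CharP K 2]
    (hK : Fintype.card K = 2 ^ n) (u : K) : (∃ t : K, t ^ 2 + t = u) ↔ trS n u = 0 := by
  constructor
  · rintro ⟨t, rfl⟩
    rw [trS_add, trS_sq hK]
    exact CharTwo.add_self_eq_zero _
  · intro hu
    let φ : K →+ K := AddMonoidHom.mk' (fun t => t ^ 2 + t) (fun a b => by
      show (a + b) ^ 2 + (a + b) = _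
      rw [sq_add]; ring)
    let τ : K →+ K := AddMonoidHom.mk' (fun t => trS n t) (fun a b => trS_add n a b)
    have hker : Nat.card φ.ker = 2 := by
      have : (φ.ker : Set K) = {0, 1} := by
        ext t
        simp only [SetLike.mem_coe, AddMonoidHom.mem_ker, Set.mem_insert_iff, Set.mem_singleton_iff]
        show t ^ 2 + t = 0 ↔ _
        constructor
        · intro h
          have : t * (t + 1) = 0 := by linear_combination h
          rcases mul_eq_zero.mp this with h | h
          · exact Or.inl h
          · exact Or.inr (CharTwo.add_eq_zero.mp h)
        · rintro (rfl | rfl)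
          · simp
          · simp [CharTwo.add_self_eq_zero]
      have h2 : Nat.card φ.ker = Set.ncard (φ.ker : Set K) := rfl
      rw [h2, this, Set.ncard_pair zero_ne_one]
    have hran : Nat.card τ.range = 2 := by
      have : (τ.range : Set K) = {0, 1} := by
        ext t
        simp only [SetLike.mem_coe, AddMonoidHom.mem_range, Set.mem_insert_iff, Set.mem_singleton_iff]
        constructor
        · rintro ⟨x, rfl⟩
          exact trS_zero_or_one hK x
        · rintro (rfl | rfl)
          · exact ⟨0, map_zero _⟩
          · exact exists_trS_one hK
      have h2 : Nat.card τ.range = Set.ncard (τ.range : Set K) := rfl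
      rw [h2, this, Set.ncard_pair zero_ne_one]
    have hle : φ.range ≤ τ.ker := by
      rintro _ ⟨t, rfl⟩
      rw [AddMonoidHom.mem_ker]
      show trS n (t ^ 2 + t) = 0
      rw [trS_add, trS_sq hK]
      exact CharTwo.add_self_eq_zero _
    have c1 := AddSubgroup.card_eq_card_quotient_mul_card_addSubgroup φ.ker
    have c2 := AddSubgroup.card_eq_card_quotient_mul_card_addSubgroup τ.ker
    rw [Nat.card_congr (QuotientAddGroup.quotientKerEquivRange φ).toEquiv, hker] at c1
    rw [Nat.card_congr (QuotientAddGroup.quotientKerEquivRange τ).toEquiv, hran] at c2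
    have heq : φ.range = τ.ker := AddSubgroup.eq_of_le_of_card_ge hle (by omega)
    have : u ∈ φ.range := by rw [heq]; exact hu
    obtain ⟨t, ht⟩ := this
    exact ⟨t, ht⟩
lemma two_group_chain (k : ℕ) : ∀ (G : Type) [AddCommGroup G] [Finite G],
    (∀ x y : G, x + x = 0 → y + y = 0 → x ≠ 0 → y ≠ 0 → x = y) →
    2 ^ (k + 1) ∣ Nat.card G → ∃ P : G, 2 ^ k • P ≠ 0 ∧ 2 ^ (k + 1) • P = 0 := by
  induction k with
  | zero =>
    intro G _ _ hu hd
    obtain ⟨x, hx⟩ := exists_prime_addOrderOf_dvd_card' (G := G) 2 (by simpa using hd)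
    refine ⟨x, ?_, ?_⟩
    · rw [pow_zero, one_smul]
      rintro rfl
      simp at hx
    · rw [zero_add, pow_one, ← hx]; exact addOrderOf_nsmul_eq_zero x
  | succ k ih =>
    intro G _ _ hu hd
    obtain ⟨x, hx⟩ := exists_prime_addOrderOf_dvd_card' (G := G) 2
      (dvd_trans (dvd_pow_self 2 (by omega)) hd)
    have hx0 : x ≠ 0 := by rintro rfl; simp at hx
    have hx2 : x + x = 0 := by rw [← two_nsmul, ← hx]; exact addOrderOf_nsmul_eq_zero x
    let φ : G →+ G := AddMonoidHom.mk' (fun t => t + t) (fun a b => by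
      show (a + b) + (a + b) = _
      abel)
    have hker : Nat.card φ.ker = 2 := by
      have : (φ.ker : Set G) = {0, x} := by
        ext t
        simp only [SetLike.mem_coe, AddMonoidHom.mem_ker, Set.mem_insert_iff, Set.mem_singleton_iff]
        show t + t = 0 ↔ _
        constructor
        · intro h
          by_cases h0 : t = 0
          · exact Or.inl h0
          · exact Or.inr (hu t x h hx2 h0 hx0)
        · rintro (rfl | rfl)
          · simp
          · exact hx2
      have h2 : Nat.card φ.ker = Set.ncard (φ.ker : Set G) := rfl
      rw [h2, this, Set.ncard_pair hx0.symm]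
    have c1 := AddSubgroup.card_eq_card_quotient_mul_card_addSubgroup φ.ker
    rw [Nat.card_congr (QuotientAddGroup.quotientKerEquivRange φ).toEquiv, hker] at c1
    obtain ⟨P, hP1, hP2⟩ := ih φ.range
      (fun a b ha hb ha0 hb0 => Subtype.ext (hu a b (by simpa using congrArg Subtype.val ha)
        (by simpa using congrArg Subtype.val hb) (by simpa using ha0) (by simpa using hb0)))
      (by rw [c1, pow_succ] at hd; exact Nat.dvd_of_mul_dvd_mul_right (by norm_num) hd)
    obtain ⟨p, ⟨q, hq⟩⟩ := P
    refine ⟨q, ?_, ?_⟩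
    · intro h
      apply hP1
      apply Subtype.ext
      show 2 ^ k • p = 0
      rw [← hq]
      show 2 ^ k • (q + q) = 0
      rw [← two_nsmul, smul_smul, ← pow_succ]; exact h
    · have := congrArg Subtype.val hP2
      have h : 2 ^ (k + 1) • p = 0 := this
      rw [← hq] at h
      have h' : 2 ^ (k + 1) • (q + q) = 0 := h
      rw [← two_nsmul, smul_smul, ← pow_succ] at h'; exact h'

noncomputable def EK {K : Type} [Field K] (A : K) : WeierstrassCurve.Affine K := ⟨1, 0, 0, 0, A⟩

section EC
set_option linter.unusedSectionVars false
variable {K : Type} [Field K] [CharP K 2]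

lemma EK_equation (A x y : K) : (EK A).Equation x y ↔ y ^ 2 + x * y = x ^ 3 + A := by
  rw [WeierstrassCurve.Affine.equation_iff]
  simp [EK]

lemma EK_elliptic {A : K} (hA : A ≠ 0) : WeierstrassCurve.IsElliptic (EK A) := by
  constructor
  have h2 : (2 : K) = 0 := two_eq_zero'
  have : (EK A).Δ = A := by
    simp only [EK, WeierstrassCurve.Δ, WeierstrassCurve.b₂, WeierstrassCurve.b₄,
      WeierstrassCurve.b₆, WeierstrassCurve.b₈]
    linear_combination (-A - 216 * A ^ 2) * h2
  rw [this]
  exact hA.isUnit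

open WeierstrassCurve.Affine in
lemma EK_double {A x y : K} (h : (EK A).Nonsingular x y) (hx : x ≠ 0) :
    ∃ y' h', (Point.some x y h + Point.some x y h : (EK A).Point)
      = Point.some (x ^ 2 + A / x ^ 2) y' h' := by
  have h2 : (2 : K) = 0 := two_eq_zero'
  have hn : (EK A).negY x y = - y - x := by simp [EK, WeierstrassCurve.Affine.negY]
  have hne : y ≠ (EK A).negY x y := by
    rw [hn]; intro h'; apply hx; linear_combination h' - y * h2
  have key : (EK A).addX x x ((EK A).slope x x y y) = x ^ 2 + A / x ^ 2 := by
    have he := (EK_equation A x y).mp h.1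
    rw [slope_of_Y_ne rfl hne, hn]
    simp only [EK, WeierstrassCurve.Affine.addX]
    have hd : y - (- y - x) = x := by linear_combination y * h2
    rw [hd]
    field_simp
    linear_combination he + (4 * x ^ 4 - 2 * x ^ 2 * y - x^2*y  - x*y + (x^3)) * h2
  rw [Point.add_self_of_Y_ne hne]
  have gen : ∀ (X Y : K) (hh : (EK A).Nonsingular X Y), X = x ^ 2 + A / x ^ 2 →
      ∃ y' h', (Point.some X Y hh : (EK A).Point) = Point.some (x ^ 2 + A / x ^ 2) y' h' := by
    rintro X Y hh rfl
    exact ⟨Y, hh, rfl⟩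
  exact gen _ _ _ key

open WeierstrassCurve.Affine in
lemma EK_double_zero {A y : K} (h : (EK A).Nonsingular 0 y) :
    (Point.some 0 y h + Point.some 0 y h : (EK A).Point) = 0 := by
  apply Point.add_self_of_Y_eq
  have h2 : (2 : K) = 0 := two_eq_zero'
  have hn : (EK A).negY 0 y = - y := by simp [EK, WeierstrassCurve.Affine.negY]
  rw [hn]; linear_combination y * h2

open WeierstrassCurve.Affine in
lemma EK_unique {A : K} (P Q : (EK A).Point) (hP : P + P = 0) (hQ : Q + Q = 0) (hP0 : P ≠ 0)
    (hQ0 : Q ≠ 0) : P = Q := by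
  have key : ∀ P : (EK A).Point, P + P = 0 → P ≠ 0 → ∃ y h, P = Point.some 0 y h := by
    intro P hP hP0
    rcases P with _ | ⟨x, y, h⟩
    · exact absurd rfl hP0
    · by_cases hx : x = 0
      · subst hx; exact ⟨y, h, rfl⟩
      · obtain ⟨y', h', he⟩ := EK_double h hx
        rw [he] at hP
        exact absurd hP (Point.some_ne_zero _)
  obtain ⟨y, h, rfl⟩ := key P hP hP0
  obtain ⟨y', h', rfl⟩ := key Q hQ hQ0
  rcases (Point.X_eq_iff (h₁ := h) (h₂ := h')).mp rfl with h1 | h1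
  · exact h1
  · rw [h1]; exact neg_eq_of_add_eq_zero_left hQ

open WeierstrassCurve.Affine in
lemma EK_double_cases {A : K} (P : (EK A).Point) (h0 : P + P ≠ 0) :
    ∃ x y h, x ≠ 0 ∧ P = Point.some x y h ∧ ∃ y' h', P + P = Point.some (x ^ 2 + A / x ^ 2) y' h' := by
  rcases P with _ | ⟨x, y, h⟩
  · exact absurd (add_zero (0 : (EK A).Point)) h0
  · by_cases hx : x = 0
    · subst hx; exact absurd (EK_double_zero h) h0
    · exact ⟨x, y, h, hx, rfl, EK_double h hx⟩

def Chain (a : K) : Prop := ∃ x2 x3 x4 x5 : K, x3 ≠ 0 ∧ x4 ≠ 0 ∧ x5 ≠ 0 ∧ x2 ^ 2 = a ∧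
  x3 ^ 4 + a ^ 2 = x2 * x3 ^ 2 ∧ x4 ^ 4 + a ^ 2 = x3 * x4 ^ 2 ∧ x5 ^ 4 + a ^ 2 = x4 * x5 ^ 2 ∧
  ∃ y, y ^ 2 + x5 * y = x5 ^ 3 + a ^ 2

lemma div_form {a x z : K} (hx : x ≠ 0) : x ^ 2 + a ^ 2 / x ^ 2 = z ↔ x ^ 4 + a ^ 2 = z * x ^ 2 := by
  field_simp

open WeierstrassCurve.Affine in
lemma card_iff_chain [Finite K] {a : K} (ha : a ≠ 0) :
    32 ∣ Nat.card (EK (a ^ 2)).Point ↔ Chain a := by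
  have hell : WeierstrassCurve.IsElliptic (EK (a ^ 2)) := EK_elliptic (pow_ne_zero 2 ha)
  have hfin : Finite (EK (a ^ 2)).Point := by
    have : Finite (WithZero {xy : K × K // (EK (a ^ 2)).Equation xy.1 xy.2}) :=
      inferInstanceAs (Finite (Option _))
    exact Finite.of_equiv _ (pointEquiv (EK (a ^ 2))).symm
  have h2 : (2 : K) = 0 := two_eq_zero'
  constructor
  · intro hd
    obtain ⟨P, hP1, hP2⟩ := two_group_chain 4 (EK (a ^ 2)).Point EK_unique hd
    have e2 : P + P = (2 : ℕ) • P := (two_nsmul P).symm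
    have e4 : (P + P) + (P + P) = (4 : ℕ) • P := by rw [e2, ← add_nsmul]
    have e8 : (P + P + (P + P)) + (P + P + (P + P)) = (8 : ℕ) • P := by rw [e4, ← add_nsmul]
    have e16 : (8 : ℕ) • P + (8 : ℕ) • P = (16 : ℕ) • P := by rw [← add_nsmul]
    have e32 : (16 : ℕ) • P + (16 : ℕ) • P = (32 : ℕ) • P := by rw [← add_nsmul]
    norm_num at hP1 hP2
    have n8 : (8 : ℕ) • P ≠ 0 := by intro h; rw [h, add_zero] at e16; exact hP1 e16.symm
    rw [← e8] at n8
    have n4 : (P + P) + (P + P) ≠ 0 := by intro h; rw [h, add_zero] at n8; exact n8 rfl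
    have n2 : P + P ≠ 0 := by intro h; rw [h, add_zero] at n4; exact n4 rfl
    obtain ⟨x5, y5, h5, hx5, p5, y4, h4, p4⟩ := EK_double_cases P n2
    obtain ⟨x4, y4', h4', hx4, p4', y3, h3, p3⟩ := EK_double_cases (P + P) n4
    obtain ⟨x3, y3', h3', hx3, p3', y2, h2', p2⟩ := EK_double_cases (P + P + (P + P)) n8
    rw [p3, Point.some.injEq] at p3'
    rw [p4, Point.some.injEq] at p4'
    rw [← e16, ← e8] at hP1
    obtain ⟨x2, y2', h2'', hx2, p2', y1, h1, p1⟩ := EK_double_cases _ hP1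
    rw [p2, Point.some.injEq] at p2'
    have p0 : x2 ^ 2 + a ^ 2 / x2 ^ 2 = 0 := by
      by_contra hne
      obtain ⟨_, _, he⟩ := EK_double h1 hne
      rw [← p1, e8, e16, e32, hP2] at he
      exact Point.some_ne_zero _ he.symm
    refine ⟨x2, x3, x4, x5, hx3, hx4, hx5, ?_, (div_form hx3).mp p2'.1, (div_form hx4).mp p3'.1,
      (div_form hx5).mp p4'.1, y5, (EK_equation _ _ _).mp h5.1⟩
    have := (div_form hx2).mp p0
    have h' : (x2 ^ 2 - a) ^ 2 = 0 := by linear_combination this - x2 ^ 2 * a * h2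
    exact sub_eq_zero.mp (pow_eq_zero_iff (two_ne_zero) |>.mp h')
  · rintro ⟨x2, x3, x4, x5, hx3, hx4, hx5, c2, c3, c4, c5, y, hy⟩
    have hx2 : x2 ≠ 0 := by rintro rfl; apply ha; rw [← c2]; ring
    have h5 : (EK (a ^ 2)).Nonsingular x5 y :=
      equation_iff_nonsingular.mp ((EK_equation _ _ _).mpr hy)
    let P : (EK (a ^ 2)).Point := Point.some x5 y h5
    have step : ∀ (Q : (EK (a ^ 2)).Point) (x z : K), (∃ y h, Q = Point.some x y h) → x ≠ 0 →
        x ^ 4 + a ^ 2 = z * x ^ 2 → ∃ y h, Q + Q = Point.some z y h := by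
      rintro Q x z ⟨y, h, rfl⟩ hx hz
      obtain ⟨y', h', e⟩ := EK_double h hx
      rw [e]
      have := (div_form hx).mpr hz
      subst this
      exact ⟨y', h', rfl⟩
    have s4 := step P x5 x4 ⟨y, h5, rfl⟩ hx5 c5
    have s3 := step _ x4 x3 s4 hx4 c4
    have s2 := step _ x3 x2 s3 hx3 c3
    have s1 := step _ x2 0 s2 hx2 (by rw [← c2]; linear_combination x2 ^ 4 * h2)
    have e2 : P + P = (2 : ℕ) • P := (two_nsmul P).symm
    rw [e2, ← add_nsmul, ← add_nsmul, ← add_nsmul] at s1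
    obtain ⟨y1, h1, e1⟩ := s1
    norm_num at e1
    have hord : addOrderOf P = 2 ^ (4 + 1) := by
      apply addOrderOf_eq_prime_pow
      · norm_num; rw [e1]; exact Point.some_ne_zero _
      · have : (2 ^ (4 + 1) : ℕ) • P = (16 : ℕ) • P + (16 : ℕ) • P := by
          rw [← add_nsmul]; norm_num
        rw [this, e1]
        exact EK_double_zero h1
    have := addOrderOf_dvd_natCard P
    rw [hord] at this
    exact this
end EC
lemma traceFn_one (n : ℕ) {K : Type} [Field K] (a : K) : traceFn 2 n 1 a = trS n a := by
  unfold traceFn trS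
  rw [Finset.powersetCard_one, Finset.sum_map]
  simp

lemma fiber_card {n : ℕ} {K : Type} [Field K] [Fintype K] [CharP K 2]
    (hK : Fintype.card K = 2 ^ n) (a x : K) (hx : x ≠ 0) :
    ((Finset.univ.filter (fun y : K => y ^ 2 + x * y = x ^ 3 + a ^ 2)).card : ℤ)
      = 1 + (-1 : ℤ) ^ (if trS n (x + a * x⁻¹) = 1 then 1 else 0) := by
  have h2 : (2 : K) = 0 := two_eq_zero'
  have htr : trS n (x + a * x⁻¹) = trS n (x + (a * x⁻¹) ^ 2) := by
    rw [trS_add, trS_add, trS_sq hK]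
  rcases trS_zero_or_one hK (x + a * x⁻¹) with h | h
  · rw [h]
    rw [htr] at h
    obtain ⟨t, ht⟩ := (AS_iff hK _).mpr h
    have : Finset.univ.filter (fun y : K => y ^ 2 + x * y = x ^ 3 + a ^ 2) = {x * t, x * t + x} := by
      have e0 : (x * t) ^ 2 + x * (x * t) = x ^ 3 + a ^ 2 := by
        have : (x * t) ^ 2 + x * (x * t) = x ^ 2 * (t ^ 2 + t) := by ring
        rw [this, ht]; field_simp
      ext y
      simp only [Finset.mem_filter, Finset.mem_univ, true_and, Finset.mem_insert,
        Finset.mem_singleton]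
      constructor
      · intro hy
        have : (y - x * t) * (y - (x * t + x)) = 0 := by
          linear_combination hy - e0 + (x * y * (-1) - x * t * y + x ^ 2 * t ^ 2 + x ^ 2 * t) * h2
        rcases mul_eq_zero.mp this with h | h
        · exact Or.inl (sub_eq_zero.mp h)
        · exact Or.inr (sub_eq_zero.mp h)
      · rintro (rfl | rfl)
        · exact e0
        · linear_combination e0 + (x ^ 2 * t + x ^ 2) * h2
    rw [this, Finset.card_pair]
    · norm_num
    · intro h; apply hx; linear_combination -h
  · rw [h]
    have : Finset.univ.filter (fun y : K => y ^ 2 + x * y = x ^ 3 + a ^ 2) = ∅ := by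
      rw [Finset.filter_eq_empty_iff]
      intro y _ hy
      have : trS n (x + (a * x⁻¹) ^ 2) = 0 := by
        rw [← AS_iff hK]
        refine ⟨y * x⁻¹, ?_⟩
        field_simp
        linear_combination hy
      rw [htr, this] at h
      exact zero_ne_one h
    rw [this]
    norm_num

open WeierstrassCurve.Affine in
lemma card_EK {n : ℕ} {K : Type} [Field K] [Fintype K] [CharP K 2]
    (hK : Fintype.card K = 2 ^ n) {a : K} (ha : a ≠ 0) :
    (Nat.card (EK (a ^ 2)).Point : ℤ) = 2 ^ n + kloosterman n K a := by
  have hell : WeierstrassCurve.IsElliptic (EK (a ^ 2)) := EK_elliptic (pow_ne_zero 2 ha)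
  have h1 : Nat.card (EK (a ^ 2)).Point
      = Nat.card {xy : K × K // (EK (a ^ 2)).Equation xy.1 xy.2} + 1 := by
    rw [Nat.card_congr (pointEquiv (EK (a ^ 2)))]
    exact Finite.card_option
  have h3 : Nat.card {xy : K × K // (EK (a ^ 2)).Equation xy.1 xy.2}
      = ∑ x : K, (Finset.univ.filter (fun y : K => y ^ 2 + x * y = x ^ 3 + a ^ 2)).card := by
    simp_rw [EK_equation]
    rw [Nat.card_eq_fintype_card, Fintype.card_subtype]
    simp_rw [Finset.card_filter]
    rw [Fintype.sum_prod_type]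
  rw [h1, h3]
  have hz : (Finset.univ.filter (fun y : K => y ^ 2 + 0 * y = 0 ^ 3 + a ^ 2)) = {a} := by
    ext y
    have h2 : (2 : K) = 0 := two_eq_zero'
    simp only [Finset.mem_filter, Finset.mem_univ, true_and, Finset.mem_singleton]
    constructor
    · intro h
      have h' : (y - a) ^ 2 = 0 := by linear_combination h + (a ^ 2 - a * y) * h2
      exact sub_eq_zero.mp (pow_eq_zero_iff (two_ne_zero) |>.mp h')
    · rintro rfl; ring
  rw [← Finset.add_sum_erase _ _ (Finset.mem_univ (0 : K)), hz]
  push_cast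
  rw [Finset.sum_congr rfl (fun x hx => fiber_card hK a x (Finset.ne_of_mem_erase hx))]
  rw [Finset.sum_add_distrib]
  have hc : ∑ x ∈ (Finset.univ : Finset K).erase 0, (1 : ℤ) = 2 ^ n - 1 := by
    rw [Finset.sum_const, Finset.card_erase_of_mem (Finset.mem_univ _), Finset.card_univ, hK]
    simp
  rw [hc]
  unfold kloosterman
  simp_rw [traceFn_one]
  have hs : ∑ x ∈ (Finset.univ : Finset K).erase 0,
      (-1 : ℤ) ^ (if trS n (x + a * x⁻¹) = 1 then 1 else 0)
      = ∑ x ∈ Finset.univ.filter (fun x : K => x ≠ 0),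
        (-1 : ℤ) ^ (if trS n (x⁻¹ + a * x) = 1 then 1 else 0) := by
    refine Finset.sum_nbij' (fun x => x⁻¹) (fun x => x⁻¹) ?_ ?_ ?_ ?_ ?_
    · intro x hx; simpa using hx
    · intro x hx; simpa using hx
    · intro x _; simp
    · intro x _; simp
    · intro x _; simp
  rw [hs]
  simp only [Finset.card_singleton, Nat.cast_one]
  ring

lemma sqrt_exists {K : Type} [Field K] [Fintype K] [CharP K 2] (u : K) : ∃ s : K, s ^ 2 = u := by
  have h : Function.Bijective (frobenius K 2) := bijective_frobenius K 2
  exact h.2 u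

lemma sq_inj {K : Type} [Field K] [CharP K 2] {x y : K} (h : x ^ 2 = y ^ 2) : x = y := by
  have h2 : (2 : K) = 0 := two_eq_zero'
  have h' : (x - y) ^ 2 = 0 := by linear_combination h + (y ^ 2 - x * y) * h2
  exact sub_eq_zero.mp (pow_eq_zero_iff (two_ne_zero) |>.mp h')

def AS {K : Type} [Field K] (u : K) : Prop := ∃ t : K, t ^ 2 + t = u

lemma AS.add {K : Type} [Field K] [CharP K 2] {u v : K} (hu : AS u) (hv : AS v) : AS (u + v) := by
  obtain ⟨s, rfl⟩ := hu
  obtain ⟨t, rfl⟩ := hv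
  exact ⟨s + t, by rw [sq_add]; ring⟩

lemma AS_sq {K : Type} [Field K] [CharP K 2] {u : K} : AS (u ^ 2) ↔ AS u := by
  have h2 : (2 : K) = 0 := two_eq_zero'
  have h0 : AS (u ^ 2 + u) := ⟨u, rfl⟩
  constructor
  · intro h
    have := h.add h0
    have e : u ^ 2 + (u ^ 2 + u) = u := by linear_combination u ^ 2 * h2
    rwa [e] at this
  · intro h
    have := h.add h0
    have e : u + (u ^ 2 + u) = u ^ 2 := by linear_combination u * h2
    rwa [e] at this

lemma AS.cancel {K : Type} [Field K] [CharP K 2] {u v : K} (hu : AS (u + v)) (hv : AS v) : AS u := by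
  have := hu.add hv
  have h2 : (2 : K) = 0 := two_eq_zero'
  have e : u + v + v = u := by linear_combination v * h2
  rwa [e] at this

def Tow {K : Type} [Field K] (a : K) : Prop := ∃ w z v : K, w ^ 2 + w = a ∧
  z ^ 2 + z = w * (w + 1) ^ 3 ∧ v ^ 2 + v = w ^ 3 * (w + 1) * (z + 1) ^ 2

lemma chain_iff_tow {K : Type} [Field K] [Fintype K] [CharP K 2] {a : K} (ha : a ≠ 0) :
    Chain a ↔ Tow a := by
  have h2 : (2 : K) = 0 := two_eq_zero'
  constructor
  · rintro ⟨x2, x3, x4, x5, hx3, hx4, hx5, c2, c3, c4, c5, -⟩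
    have hx2 : x2 ≠ 0 := by rintro rfl; apply ha; rw [← c2]; ring
    have hw : ∃ w, w * x2 = x3 ^ 2 := ⟨x3 ^ 2 / x2, by field_simp⟩
    obtain ⟨w, hw⟩ := hw
    have hw0 : w ≠ 0 := by rintro rfl; apply hx3; simpa using hw.symm
    have hz : ∃ z, z * x3 ^ 2 = x4 ^ 4 := ⟨x4 ^ 4 / x3 ^ 2, by field_simp⟩
    obtain ⟨z, hz⟩ := hz
    have hz0 : z ≠ 0 := by rintro rfl; apply hx4; simpa using hz.symm
    have hv : ∃ v, v * x4 ^ 4 = x5 ^ 8 := ⟨x5 ^ 8 / x4 ^ 4, by field_simp⟩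
    obtain ⟨v, hv⟩ := hv
    have e1 : w ^ 2 + w = a := by
      apply mul_right_cancel₀ ha
      rw [← c2] at c3 ⊢
      have : (w ^ 2 + w) * x2 ^ 2 = (w * x2) ^ 2 + (w * x2) * x2 := by ring
      rw [this, hw]
      linear_combination c3 + (- x2 ^ 4 + x2 * x3 ^ 2) * h2
    have hx34 : x3 ^ 4 = a * w ^ 2 := by rw [← c2]; linear_combination (- x3 ^ 2 - w * x2) * hw
    have e2' : (z ^ 2 + z) * x3 ^ 4 = a ^ 4 := by
      have : (z ^ 2 + z) * x3 ^ 4 = (z * x3 ^ 2) ^ 2 + (z * x3 ^ 2) * x3 ^ 2 := by ring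
      rw [this, hz]
      linear_combination (x4 ^ 4 - a ^ 2 - x3 * x4 ^ 2) * c4 + (x3 ^ 2 * x4 ^ 4 - a ^ 2 * x3 * x4 ^ 2) * h2 + (x3 * x4 ^ 2 * a ^ 2 - x4 ^ 4 * x3 ^ 2 + x4 ^ 6 * x3) * h2
    have e2 : z ^ 2 + z = w * (w + 1) ^ 3 := by
      apply mul_right_cancel₀ (pow_ne_zero 4 hx3)
      rw [e2', hx34, ← e1]; ring
    refine ⟨w, z, v, e1, e2, ?_⟩
    have e3' : (v ^ 2 + v) * x4 ^ 8 = a ^ 8 := by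
      have : (v ^ 2 + v) * x4 ^ 8 = (v * x4 ^ 4) ^ 2 + (v * x4 ^ 4) * x4 ^ 4 := by ring
      rw [this, hv]
      have c5' : x5 ^ 8 + a ^ 4 = x4 ^ 2 * x5 ^ 4 := by
        linear_combination (x5 ^ 4 + a ^ 2 + x4 * x5 ^ 2) * c5 - x5 ^ 4 * a ^ 2 * h2
      linear_combination (x5 ^ 8 - a ^ 4 - x4 ^ 2 * x5 ^ 4) * c5' + (x4 ^ 4 * x5 ^ 8 - a ^ 4 * x4 ^ 2 * x5 ^ 4) * h2 + (x4 ^ 2 * x5 ^ 4 * a ^ 4 - x5 ^ 8 * x4 ^ 4 + x5 ^ 12 * x4 ^ 2) * h2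
    have hx48 : x4 ^ 8 = z ^ 2 * (a * w ^ 2) := by
      rw [← hx34]; linear_combination (- x4 ^ 4 - z * x3 ^ 2) * hz
    have hp : z ^ 2 * (z + 1) ^ 2 = w ^ 2 * (w + 1) ^ 6 := by
      linear_combination (z ^ 2 + z + w * (w + 1) ^ 3) * e2
    apply mul_right_cancel₀ (pow_ne_zero 8 hx4)
    rw [e3', hx48, ← e1]
    linear_combination (- w ^ 6 * (w + 1) ^ 2) * hp
  · rintro ⟨w, z, v, e1, e2, e3⟩
    have hw0 : w ≠ 0 := by rintro rfl; apply ha; rw [← e1]; ring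
    have hw1 : w + 1 ≠ 0 := by intro h; apply ha; rw [← e1]; linear_combination w * h
    have hz0 : z ≠ 0 := by
      rintro rfl
      have : w * (w + 1) ^ 3 = 0 := by rw [← e2]; ring
      exact (mul_ne_zero hw0 (pow_ne_zero 3 hw1)) this
    have hz1 : z + 1 ≠ 0 := by
      intro h
      have : w * (w + 1) ^ 3 = 0 := by rw [← e2]; linear_combination z * h
      exact (mul_ne_zero hw0 (pow_ne_zero 3 hw1)) this
    have hv0 : v ≠ 0 := by
      rintro rfl
      have : w ^ 3 * (w + 1) * (z + 1) ^ 2 = 0 := by rw [← e3]; ring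
      exact (mul_ne_zero (mul_ne_zero (pow_ne_zero 3 hw0) hw1) (pow_ne_zero 2 hz1)) this
    obtain ⟨x2, c2⟩ := sqrt_exists a
    have hx2 : x2 ≠ 0 := by rintro rfl; apply ha; rw [← c2]; ring
    obtain ⟨x3, hx3'⟩ := sqrt_exists (w * x2)
    have hx3 : x3 ≠ 0 := by
      rintro rfl; apply mul_ne_zero hw0 hx2; rw [← hx3']; ring
    obtain ⟨s, hs⟩ := sqrt_exists (z * x3 ^ 2)
    obtain ⟨x4, hx4'⟩ := sqrt_exists s
    have hx44 : x4 ^ 4 = z * x3 ^ 2 := by rw [← hs, ← hx4']; ring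
    have hx4 : x4 ≠ 0 := by
      rintro rfl; apply mul_ne_zero hz0 (pow_ne_zero 2 hx3); rw [← hx44]; ring
    obtain ⟨s1, hs1⟩ := sqrt_exists (v * x4 ^ 4)
    obtain ⟨s2, hs2⟩ := sqrt_exists s1
    obtain ⟨x5, hs3⟩ := sqrt_exists s2
    have hx58 : x5 ^ 8 = v * x4 ^ 4 := by rw [← hs1, ← hs2, ← hs3]; ring
    have hx5 : x5 ≠ 0 := by
      rintro rfl; apply mul_ne_zero hv0 (pow_ne_zero 4 hx4); rw [← hx58]; ring
    have hx34 : x3 ^ 4 = a * w ^ 2 := by rw [← c2]; linear_combination (x3 ^ 2 + w * x2) * hx3'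
    have c3 : x3 ^ 4 + a ^ 2 = x2 * x3 ^ 2 := by
      rw [hx34, hx3']
      have : x2 * (w * x2) = w * a := by rw [← c2]; ring
      rw [this]
      linear_combination (-a) * e1 + (a * w ^ 2) * h2
    have c4 : x4 ^ 4 + a ^ 2 = x3 * x4 ^ 2 := by
      apply sq_inj
      have t1 : (x4 ^ 4 + a ^ 2) ^ 2 = (z * x3 ^ 2) ^ 2 + a ^ 4 := by rw [sq_add, hx44]; ring
      have t2 : (x3 * x4 ^ 2) ^ 2 = x3 ^ 2 * (z * x3 ^ 2) := by rw [← hx44]; ring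
      have t3 : x3 ^ 4 * (z ^ 2 + z) = a ^ 4 := by rw [e2, hx34, ← e1]; ring
      rw [t1, t2]
      linear_combination (-1) * t3 + (z ^ 2 * x3 ^ 4) * h2
    have hx48 : x4 ^ 8 = z ^ 2 * (a * w ^ 2) := by
      rw [← hx34]; linear_combination (x4 ^ 4 + z * x3 ^ 2) * hx44
    have hp : z ^ 2 * (z + 1) ^ 2 = w ^ 2 * (w + 1) ^ 6 := by
      linear_combination (z ^ 2 + z + w * (w + 1) ^ 3) * e2
    have c5 : x5 ^ 4 + a ^ 2 = x4 * x5 ^ 2 := by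
      apply sq_inj
      apply sq_inj
      have t1 : ((x5 ^ 4 + a ^ 2) ^ 2) ^ 2 = (v * x4 ^ 4) ^ 2 + a ^ 8 := by
        rw [sq_add, sq_add, ← hx58]; ring
      have t2 : ((x4 * x5 ^ 2) ^ 2) ^ 2 = x4 ^ 4 * (v * x4 ^ 4) := by rw [← hx58]; ring
      have t3 : x4 ^ 8 * (v ^ 2 + v) = a ^ 8 := by
        rw [e3, hx48, ← e1]
        linear_combination (w ^ 6 * (w + 1) ^ 2) * hp
      rw [t1, t2]
      linear_combination (-1) * t3 + (v ^ 2 * x4 ^ 8) * h2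
    refine ⟨x2, x3, x4, x5, hx3, hx4, hx5, c2, c3, c4, c5, ?_⟩
    have sqform : ∀ x z : K, x ≠ 0 → x ^ 4 + a ^ 2 = z * x ^ 2 → (x + a / x) ^ 2 = z := by
      intro x z hx h
      rw [sq_add]
      field_simp
      linear_combination h
    have inv : ∀ x z : K, z ≠ 0 → x ^ 4 + a ^ 2 = z * x ^ 2 → AS (a / z) := by
      intro x z hz h
      rw [← AS_sq]
      refine ⟨x ^ 2 / z, ?_⟩
      field_simp
      linear_combination h + (z * x ^ 2 - a ^ 2) * h2
    have a2 : AS x2 := by rw [← AS_sq, c2]; exact ⟨w, e1⟩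
    have a3' : AS (x3 + a / x3) := by rw [← AS_sq, sqform x3 x2 hx3 c3]; exact a2
    have a3 : AS x3 := a3'.cancel (inv x4 x3 hx3 c4)
    have a4' : AS (x4 + a / x4) := by rw [← AS_sq, sqform x4 x3 hx4 c4]; exact a3
    have a4 : AS x4 := a4'.cancel (inv x5 x4 hx4 c5)
    have a5' : AS (x5 + a / x5) := by rw [← AS_sq, sqform x5 x4 hx5 c5]; exact a4
    have a5 : AS (x5 + (a / x5) ^ 2) := by
      have h0 : AS ((a / x5) ^ 2 + a / x5) := ⟨_, rfl⟩
      have := a5'.add h0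
      have e : x5 + a / x5 + ((a / x5) ^ 2 + a / x5) = x5 + (a / x5) ^ 2 := by
        linear_combination (a / x5) * h2
      rwa [e] at this
    obtain ⟨t, ht⟩ := a5
    refine ⟨x5 * t, ?_⟩
    have : (x5 * t) ^ 2 + x5 * (x5 * t) = x5 ^ 2 * (t ^ 2 + t) := by ring
    rw [this, ht]
    field_simp
lemma coeff_prod_traceFn (n k : ℕ) {K : Type} [Field K] (a : K) :
    (∏ i ∈ Finset.range n, (1 + C (a ^ (2 ^ i)) * X : K[X])).coeff k = traceFn 2 n k a := by
  rw [Finset.prod_one_add, finsetSum_coeff]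
  unfold traceFn
  rw [Finset.powersetCard_eq_filter, Finset.sum_filter]
  refine Finset.sum_congr rfl fun t _ => ?_
  rw [Finset.prod_mul_distrib, Finset.prod_const, ← map_prod, coeff_C_mul_X_pow]
  simp only [eq_comm]

/-- product of the Frobenius twists of a polynomial -/
noncomputable def Nm (n : ℕ) {K : Type} [Field K] [CharP K 2] (p : K[X]) : K[X] :=
  ∏ i ∈ Finset.range n, p.map (iterateFrobenius K 2 i)

section NmSec
set_option linter.unusedSectionVars false
variable {n : ℕ} {K : Type} [Field K] [CharP K 2]

lemma Nm_mul (p q : K[X]) : Nm n (p * q) = Nm n p * Nm n q := by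
  unfold Nm
  rw [← Finset.prod_mul_distrib]
  simp_rw [Polynomial.map_mul]

lemma Nm_frob [Fintype K] (hK : Fintype.card K = 2 ^ n) (p : K[X]) :
    Nm n (p.map (frobenius K 2)) = Nm n p := by
  unfold Nm
  have h1 : ∀ i, (p.map (frobenius K 2)).map (iterateFrobenius K 2 i)
      = p.map (iterateFrobenius K 2 (i + 1)) := fun i => by
    rw [Polynomial.map_map]
    congr 1
    ext x
    simp only [RingHom.comp_apply, iterateFrobenius_def, frobenius_def]
    rw [← pow_mul, pow_succ, mul_comm]
  simp_rw [h1]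
  have hid : p.map (iterateFrobenius K 2 n) = p.map (iterateFrobenius K 2 0) := by
    congr 1
    ext x
    simp only [iterateFrobenius_def]
    rw [← hK, FiniteField.pow_card, pow_zero, pow_one]
  rcases n with _ | m
  · simp
  · rw [Finset.prod_range_succ, hid, Finset.prod_range_succ']

lemma dvd_prod_sub {ι : Type} (s : Finset ι) (f g : ι → K[X]) (d : K[X])
    (h : ∀ i ∈ s, d ∣ f i - g i) : d ∣ ∏ i ∈ s, f i - ∏ i ∈ s, g i := by
  induction s using Finset.induction_on with
  | empty => simp
  | insert i s hi ih =>
    rw [Finset.prod_insert hi, Finset.prod_insert hi]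
    have e : f i * ∏ i ∈ s, f i - g i * ∏ i ∈ s, g i
      = (f i - g i) * ∏ i ∈ s, f i + g i * (∏ i ∈ s, f i - ∏ i ∈ s, g i) := by ring
    rw [e]
    exact dvd_add (Dvd.dvd.mul_right (h i (Finset.mem_insert_self _ _)) _)
      (Dvd.dvd.mul_left (ih fun j hj => h j (Finset.mem_insert_of_mem hj)) _)

lemma Nm_congr {p q : K[X]} {m : ℕ} (h : X ^ m ∣ p - q) : X ^ m ∣ Nm n p - Nm n q := by
  unfold Nm
  apply dvd_prod_sub
  intro i _
  have := Polynomial.map_dvd (iterateFrobenius K 2 i) h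
  simpa using this

lemma Nm_one_add_X2 (c : K) :
    X ^ 3 ∣ Nm n (1 + C c * X ^ 2) - (1 + C (trS n c) * X ^ 2) := by
  unfold Nm trS
  induction n with
  | zero => simp
  | succ n ih =>
    rw [Finset.prod_range_succ, Finset.sum_range_succ]
    simp only [Polynomial.map_add, Polynomial.map_one, Polynomial.map_mul, Polynomial.map_pow,
      map_X, map_C, iterateFrobenius_def, C_add] at ih ⊢
    obtain ⟨r, hr⟩ := ih
    rw [sub_eq_iff_eq_add] at hr
    rw [hr]
    generalize C (c ^ 2 ^ n) = u
    generalize C (∑ i ∈ Finset.range n, c ^ 2 ^ i) = v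
    exact ⟨r * (1 + u * X ^ 2) + u * v * X, by ring⟩

lemma Nm_one_add_X34 (α β : K) :
    X ^ 5 ∣ Nm n (1 + C α * X ^ 3 + C β * X ^ 4)
      - (1 + C (trS n α) * X ^ 3 + C (trS n β) * X ^ 4) := by
  unfold Nm trS
  induction n with
  | zero => simp
  | succ n ih =>
    rw [Finset.prod_range_succ, Finset.sum_range_succ, Finset.sum_range_succ]
    simp only [Polynomial.map_add, Polynomial.map_one, Polynomial.map_mul, Polynomial.map_pow,
      map_X, map_C, iterateFrobenius_def, C_add] at ih ⊢
    obtain ⟨r, hr⟩ := ih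
    rw [sub_eq_iff_eq_add] at hr
    rw [hr]
    generalize C (α ^ 2 ^ n) = u
    generalize C (∑ i ∈ Finset.range n, α ^ 2 ^ i) = v
    generalize C (β ^ 2 ^ n) = u'
    generalize C (∑ i ∈ Finset.range n, β ^ 2 ^ i) = v'
    exact ⟨r * (1 + u * X ^ 3 + u' * X ^ 4) + u * v * X + (u * v' + u' * v) * X ^ 2
      + u' * v' * X ^ 3, by ring⟩

lemma Nm_coeff_zero {p : K[X]} (h : p.coeff 0 = 1) : (Nm n p).coeff 0 = 1 := by
  unfold Nm
  rw [coeff_zero_eq_eval_zero, eval_prod]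
  apply Finset.prod_eq_one
  intro i _
  rw [← coeff_zero_eq_eval_zero, coeff_map, h, map_one]

lemma Nm_cancel [Fintype K] (hK : Fintype.card K = 2 ^ n) {f h r : K[X]} {m : ℕ}
    (h0 : h.coeff 0 = 1) (hd : X ^ m ∣ f * h - h.map (frobenius K 2) * r) :
    X ^ m ∣ Nm n f - Nm n r := by
  have h1 := Nm_congr (n := n) hd
  rw [Nm_mul, Nm_mul, Nm_frob hK] at h1
  have e : Nm n f * Nm n h - Nm n h * Nm n r = Nm n h * (Nm n f - Nm n r) := by ring
  rw [e] at h1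
  refine IsCoprime.dvd_of_dvd_mul_left ?_ h1
  apply IsCoprime.pow_left
  rw [Prime.coprime_iff_not_dvd Polynomial.prime_X, X_dvd_iff, Nm_coeff_zero h0]
  exact one_ne_zero

lemma Nm_lin (a : K) (k : ℕ) : (Nm n (1 + C a * X)).coeff k = traceFn 2 n k a := by
  rw [← coeff_prod_traceFn]
  unfold Nm
  simp [iterateFrobenius_def]

lemma T2_formula [Fintype K] (hK : Fintype.card K = 2 ^ n) (w : K) :
    traceFn 2 n 2 (w ^ 2 + w) = trS n (w ^ 3 + w ^ 2) := by
  have h2 : (C 2 : K[X]) = 0 := by rw [two_eq_zero', C_0]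
  have hd : (X : K[X]) ^ 3 ∣ (1 + C (w ^ 2 + w) * X) * (1 + C w * X)
      - (1 + C w * X).map (frobenius K 2) * (1 + C (w ^ 3 + w ^ 2) * X ^ 2) := by
    refine ⟨- (C w ^ 2 * (C w ^ 3 + C w ^ 2)), ?_⟩
    simp only [Polynomial.map_add, Polynomial.map_one, Polynomial.map_mul, map_X, map_C,
      frobenius_def, C_add, C_pow]
    have h2' : (2 : K[X]) = 0 := by rw [← h2]; rfl
    linear_combination (C w * X) * h2'
  have h1 := Nm_cancel hK (by simp) hd
  have h3 := dvd_add h1 (Nm_one_add_X2 (n := n) (w ^ 3 + w ^ 2))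
  rw [sub_add_sub_cancel, X_pow_dvd_iff] at h3
  have h4 := h3 2 (by norm_num)
  rw [coeff_sub, Nm_lin, sub_eq_zero] at h4
  rw [h4]
  simp [coeff_one]

lemma T4_formula [Fintype K] (hK : Fintype.card K = 2 ^ n) (w y : K)
    (hy : y ^ 2 + y = w ^ 3 + w ^ 2) :
    traceFn 2 n 4 (w ^ 2 + w) = trS n ((w ^ 3 + w ^ 2) * (y + w ^ 4)) := by
  have h2' : (2 : K[X]) = 0 := by
    have : (C 2 : K[X]) = 0 := by rw [two_eq_zero', C_0]
    rw [← this]; rfl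
  have hy' : C y ^ 2 + C y = C w ^ 3 + C w ^ 2 := by
    rw [← C_pow, ← C_add, hy, C_add, C_pow, C_pow]
  have hd : (X : K[X]) ^ 5 ∣ (1 + C (w ^ 2 + w) * X) * ((1 + C w * X) * (1 + C y * X ^ 2))
      - ((1 + C w * X) * (1 + C y * X ^ 2)).map (frobenius K 2)
        * (1 + C (w ^ 2 * (w ^ 3 + w ^ 2)) * X ^ 3
            + C ((w ^ 3 + w ^ 2) * (y + w ^ 4)) * X ^ 4) := by
    simp only [Polynomial.map_add, Polynomial.map_one, Polynomial.map_mul, map_X, map_C,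
      frobenius_def, C_add, C_pow, Polynomial.map_pow, C_mul]
    generalize C w = W at *
    generalize C y = Y at *
    have hd' : ∃ r : K[X], (1 + (W ^ 2 + W) * X) * ((1 + W * X) * (1 + Y * X ^ 2)) -
        (1 + W ^ 2 * X) * (1 + Y ^ 2 * X ^ 2) *
        (1 + W ^ 2 * (W ^ 3 + W ^ 2) * X ^ 3 + (W ^ 3 + W ^ 2) * (Y + W ^ 4) * X ^ 4) = X ^ 5 * r := by
      refine ⟨(W ^ 3 + W ^ 2) * (W ^ 2 * (Y + W ^ 4) + Y ^ 2 * W ^ 2 +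
        X * Y ^ 2 * (W ^ 4 + Y + W ^ 4) + X ^ 2 * W ^ 2 * Y ^ 2 * (Y + W ^ 4)), ?_⟩
      generalize (X : K[X]) = x
      clear hy hK
      grind
    exact hd'
  have h1 := Nm_cancel hK (by simp) hd
  have h3 := dvd_add h1 (Nm_one_add_X34 (n := n) (w ^ 2 * (w ^ 3 + w ^ 2))
    ((w ^ 3 + w ^ 2) * (y + w ^ 4)))
  rw [sub_add_sub_cancel, X_pow_dvd_iff] at h3
  have h4 := h3 4 (by norm_num)
  rw [coeff_sub, Nm_lin, sub_eq_zero] at h4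
  rw [h4]
  simp [coeff_one, coeff_X_pow]

lemma tow_iff [Fintype K] (hK : Fintype.card K = 2 ^ n) (a : K) :
    Tow a ↔ traceFn 2 n 1 a = 0 ∧ traceFn 2 n 2 a = 0 ∧ traceFn 2 n 4 a = 0 := by
  have h2 : (2 : K) = 0 := two_eq_zero'
  constructor
  · rintro ⟨w, z, v, rfl, e2, e3⟩
    have hy : (z + w ^ 2 + w) ^ 2 + (z + w ^ 2 + w) = w ^ 3 + w ^ 2 := by
      linear_combination e2 + (z * w ^ 2 + z * w + w ^ 4 + 2 * w ^ 3 + 2 * w ^ 2 + w) * h2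
    refine ⟨?_, ?_, ?_⟩
    · rw [traceFn_one, ← AS_iff hK]; exact ⟨w, rfl⟩
    · rw [T2_formula hK, ← AS_iff hK]; exact ⟨_, hy⟩
    · rw [T4_formula hK w _ hy, ← AS_iff hK]
      refine ⟨v + w ^ 2 * (z + w ^ 2 + w) + w ^ 4 + w ^ 3, ?_⟩
      clear hK; grind
  · rintro ⟨h1, h2', h4⟩
    rw [traceFn_one, ← AS_iff hK] at h1
    obtain ⟨w, rfl⟩ := h1
    rw [T2_formula hK, ← AS_iff hK] at h2'
    obtain ⟨y, hy⟩ := h2'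
    rw [T4_formula hK w _ hy, ← AS_iff hK] at h4
    obtain ⟨v, hv⟩ := h4
    refine ⟨w, y + w ^ 2 + w, v + w ^ 2 * y + w ^ 4 + w ^ 3, rfl, ?_, ?_⟩
    · linear_combination hy + (y * w ^ 2 + y * w) * h2
    · clear hK; grind
end NmSec
lemma klo_zero {n : ℕ} {K : Type} [Field K] [Fintype K] [CharP K 2]
    (hK : Fintype.card K = 2 ^ n) : kloosterman n K 0 = 0 := by
  unfold kloosterman
  simp_rw [traceFn_one, zero_mul, add_zero]
  have hs : ∑ x ∈ Finset.univ.filter (fun x : K => x ≠ 0),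
        (-1 : ℤ) ^ (if trS n (x⁻¹) = 1 then 1 else 0) =
      ∑ x ∈ Finset.univ.filter (fun x : K => x ≠ 0),
        (-1 : ℤ) ^ (if trS n x = 1 then 1 else 0) := by
    refine Finset.sum_nbij' (fun x => x⁻¹) (fun x => x⁻¹) ?_ ?_ ?_ ?_ ?_
    · intro x hx; simpa using hx
    · intro x hx; simpa using hx
    · intro x _; simp
    · intro x _; simp
    · intro x _; simp
  rw [hs]
  have h0 : trS n (0 : K) = 0 := by
    rw [← AS_iff hK]; exact ⟨0, by ring⟩
  have h1 : (1 : ℤ) = (-1 : ℤ) ^ (if trS n (0 : K) = 1 then 1 else 0) := by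
    rw [h0]; simp
  have h2 : (1 : ℤ) + ∑ x ∈ Finset.univ.filter (fun x : K => x ≠ 0),
        (-1 : ℤ) ^ (if trS n x = 1 then 1 else 0)
      = ∑ x : K, (-1 : ℤ) ^ (if trS n x = 1 then 1 else 0) := by
    rw [← Finset.add_sum_erase _ _ (Finset.mem_univ (0 : K)), ← h1]
    congr 1
    apply Finset.sum_congr _ fun _ _ => rfl
    ext x; simp
  rw [h2]
  obtain ⟨θ, hθ⟩ := exists_trS_one hK
  have h3 : ∑ x : K, (-1 : ℤ) ^ (if trS n x = 1 then 1 else 0)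
      = ∑ x : K, (-1 : ℤ) ^ (if trS n (x + θ) = 1 then 1 else 0) :=
    (Equiv.sum_comp (Equiv.addRight θ)
      (fun x : K => (-1 : ℤ) ^ (if trS n x = 1 then 1 else 0))).symm
  have h4 : ∑ x : K, (-1 : ℤ) ^ (if trS n (x + θ) = 1 then 1 else 0)
      = - ∑ x : K, (-1 : ℤ) ^ (if trS n x = 1 then 1 else 0) := by
    rw [← Finset.sum_neg_distrib]
    refine Finset.sum_congr rfl fun x _ => ?_
    rw [trS_add, hθ]
    rcases trS_zero_or_one hK x with h | h
    · rw [h]; simp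
    · rw [h, CharTwo.add_self_eq_zero]; simp
  omega

lemma klo_iff {n : ℕ} (hn : 5 ≤ n) {K : Type} [Field K] [Fintype K] [CharP K 2]
    (hK : Fintype.card K = 2 ^ n) (a : K) : (32 : ℤ) ∣ kloosterman n K a ↔
      traceFn 2 n 1 a = 0 ∧ traceFn 2 n 2 a = 0 ∧ traceFn 2 n 4 a = 0 := by
  rw [← tow_iff hK]
  by_cases ha : a = 0
  · subst ha
    rw [klo_zero hK]
    exact ⟨fun _ => ⟨0, 0, 0, by ring, by ring, by ring⟩, fun _ => dvd_zero _⟩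
  · rw [← chain_iff_tow ha, ← card_iff_chain ha]
    have h := card_EK hK ha
    have h32 : (32 : ℤ) ∣ 2 ^ n := by
      have : (32 : ℤ) = 2 ^ 5 := by norm_num
      rw [this]; exact pow_dvd_pow 2 hn
    rw [← Int.natCast_dvd_natCast, h]
    push_cast
    exact (Int.dvd_add_right h32).symm
/-- index in `ℤ/8` of a truncated power series `1 + e₁X + e₂X² + e₃X³ + e₄X⁴` over `F₂` -/
def kapN (e1 e2 e3 e4 : ZMod 2) : ℕ :=
  e1.val + 2 * e2.val + 4 * (e4.val + e1.val * e2.val + e1.val * e3.val)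

lemma kapN_mul : ∀ a1 a2 a3 a4 b1 b2 b3 b4 : ZMod 2,
    kapN (a1 + b1) (a2 + a1 * b1 + b2) (a3 + a2 * b1 + a1 * b2 + b3)
      (a4 + a3 * b1 + a2 * b2 + a1 * b3 + b4) % 8
    = (kapN a1 a2 a3 a4 + kapN b1 b2 b3 b4) % 8 := by
  unfold kapN
  decide

lemma kapN_zero : ∀ a1 a2 a3 a4 : ZMod 2,
    8 ∣ kapN a1 a2 a3 a4 ↔ a1 = 0 ∧ a2 = 0 ∧ a4 = 0 := by
  unfold kapN
  decide

lemma kapN_flip4 : ∀ a1 a2 a3 a4 : ZMod 2,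
    kapN a1 a2 a3 (a4 + 1) % 8 = (kapN a1 a2 a3 a4 + 4) % 8 := by
  unfold kapN
  decide

lemma kapN_flip2 : ∀ a1 a2 a3 a4 : ZMod 2,
    kapN a1 (a2 + 1) a3 a4 % 4 = (kapN a1 a2 a3 a4 + 2) % 4 := by
  unfold kapN
  decide

lemma kapN_flip1 : ∀ a1 a2 a3 a4 : ZMod 2,
    kapN (a1 + 1) a2 a3 a4 % 2 = (kapN a1 a2 a3 a4 + 1) % 2 := by
  unfold kapN
  decide

noncomputable def kap (r : (ZMod 2)[X]) : ℕ := kapN (r.coeff 1) (r.coeff 2) (r.coeff 3) (r.coeff 4)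

lemma kap_mul {r s : (ZMod 2)[X]} (hr : r.coeff 0 = 1) (hs : s.coeff 0 = 1) :
    kap (r * s) % 8 = (kap r + kap s) % 8 := by
  unfold kap
  rw [← kapN_mul]
  simp only [coeff_mul, Finset.Nat.antidiagonal_succ, Finset.Nat.antidiagonal_zero,
    Finset.sum_cons, Finset.map_singleton, Finset.sum_singleton, Finset.map_cons, 
    Finset.sum_map, Function.Embedding.prodMap, Function.Embedding.coeFn_mk, Prod.map,
    Nat.succ_eq_add_one, Function.Embedding.refl_apply, hr, hs]
  norm_num [hr, hs]
  congr 2 <;> ring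

noncomputable def chi (ω : ℂ) (g : (ZMod 2)[X]) : ℂ := ω ^ (kap g.reverse)

lemma pow_eq_of_mod {ω : ℂ} {d : ℕ} (h : ω ^ d = 1) {a b : ℕ} (hab : a % d = b % d) :
    ω ^ a = ω ^ b := by
  rw [pow_eq_pow_mod a h, pow_eq_pow_mod b h, hab]

lemma chi_mul {ω : ℂ} (hω : ω ^ 8 = 1) {f g : (ZMod 2)[X]} (hf : f.Monic) (hg : g.Monic) :
    chi ω (f * g) = chi ω f * chi ω g := by
  unfold chi
  rw [reverse_mul_of_domain, ← pow_add]
  apply pow_eq_of_mod hω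
  apply kap_mul <;> simpa

lemma chi_one (ω : ℂ) : chi ω 1 = 1 := by
  unfold chi kap
  have : (1 : (ZMod 2)[X]).reverse = 1 := by simpa using reverse_C (1 : ZMod 2)
  rw [this]
  simp [coeff_one, kapN]

lemma chi_pow {ω : ℂ} (hω : ω ^ 8 = 1) {f : (ZMod 2)[X]} (hf : f.Monic) (k : ℕ) :
    chi ω (f ^ k) = chi ω f ^ k := by
  induction k with
  | zero => simp [chi_one]
  | succ k ih => rw [pow_succ, pow_succ, chi_mul hω (hf.pow k) hf, ih]

/-- the monic polynomial of degree `m` with top coefficients `v` -/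
noncomputable def polyOf (m : ℕ) (v : Fin m → ZMod 2) : (ZMod 2)[X] :=
  X ^ m + ∑ i : Fin m, C (v i) * X ^ (m - 1 - i.val)

lemma polyOf_deg_aux (m : ℕ) (v : Fin m → ZMod 2) :
    (∑ i : Fin m, C (v i) * X ^ (m - 1 - i.val) : (ZMod 2)[X]).degree < m := by
  rcases Nat.eq_zero_or_pos m with rfl | hm
  · simp
  · refine lt_of_le_of_lt (degree_sum_le _ _) ?_
    rw [Finset.sup_lt_iff (by exact_mod_cast WithBot.bot_lt_coe m)]
    intro i _
    refine lt_of_le_of_lt (degree_C_mul_X_pow_le _ _) ?_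
    exact_mod_cast (by omega : m - 1 - i.val < m)

lemma polyOf_monic (m : ℕ) (v : Fin m → ZMod 2) : (polyOf m v).Monic :=
  monic_X_pow_add (polyOf_deg_aux m v)

lemma polyOf_natDegree (m : ℕ) (v : Fin m → ZMod 2) : (polyOf m v).natDegree = m := by
  unfold polyOf
  rw [natDegree_add_eq_left_of_degree_lt, natDegree_X_pow]
  rw [degree_X_pow]; exact polyOf_deg_aux m v

lemma polyOf_coeff (m : ℕ) (v : Fin m → ZMod 2) (i : Fin m) :
    (polyOf m v).coeff (m - 1 - i.val) = v i := by
  unfold polyOf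
  have hi := i.2
  rw [coeff_add, coeff_X_pow, if_neg (by omega), finsetSum_coeff, zero_add,
    Finset.sum_eq_single i]
  · simp
  · intro j _ hj
    rw [coeff_C_mul_X_pow, if_neg]
    intro h
    apply hj
    have := j.2
    ext; omega
  · simp

noncomputable def Mset (m : ℕ) : Finset (ZMod 2)[X] := Finset.univ.image (polyOf m)

lemma mem_Mset {m : ℕ} {g : (ZMod 2)[X]} : g ∈ Mset m ↔ g.Monic ∧ g.natDegree = m := by
  unfold Mset
  simp only [Finset.mem_image, Finset.mem_univ, true_and]
  constructor
  · rintro ⟨v, rfl⟩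
    exact ⟨polyOf_monic m v, polyOf_natDegree m v⟩
  · rintro ⟨hg, hd⟩
    refine ⟨fun i => g.coeff (m - 1 - i.val), ?_⟩
    ext k
    rcases lt_trichotomy k m with h | h | h
    · have := polyOf_coeff m (fun i => g.coeff (m - 1 - i.val)) ⟨m - 1 - k, by omega⟩
      simp only at this
      have e : m - 1 - (m - 1 - k) = k := by omega
      rw [e] at this
      exact this
    · subst h
      have h1 := polyOf_monic k (fun i => g.coeff (k - 1 - i.val))
      have h2 := hg
      unfold Monic leadingCoeff at h1 h2
      rw [polyOf_natDegree] at h1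
      rw [hd] at h2
      rw [h1, h2]
    · rw [coeff_eq_zero_of_natDegree_lt, coeff_eq_zero_of_natDegree_lt]
      · omega
      · rw [polyOf_natDegree]; exact h

lemma polyOf_inj (m : ℕ) : Function.Injective (polyOf m) := by
  intro v w h
  ext i
  rw [← polyOf_coeff m v i, ← polyOf_coeff m w i, h]

def extv {m : ℕ} (v : Fin m → ZMod 2) (k : ℕ) : ZMod 2 := if h : k < m then v ⟨k, h⟩ else 0

lemma polyOf_rev (m : ℕ) (v : Fin m → ZMod 2) (k : ℕ) :
    (polyOf m v).reverse.coeff (k + 1) = extv v k := by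
  rw [coeff_reverse, polyOf_natDegree]
  unfold extv
  split_ifs with h
  · rw [revAt_le (by omega), ← polyOf_coeff m v ⟨k, h⟩]
    congr 1
    simp only; omega
  · rw [revAt_eq_self_of_lt (by omega), coeff_eq_zero_of_natDegree_lt]
    rw [polyOf_natDegree]; omega

noncomputable def Asum (ω : ℂ) (m : ℕ) : ℂ := ∑ g ∈ Mset m, chi ω g

def kapv {m : ℕ} (v : Fin m → ZMod 2) : ℕ := kapN (extv v 0) (extv v 1) (extv v 2) (extv v 3)

lemma Asum_eq (ω : ℂ) (m : ℕ) : Asum ω m = ∑ v : Fin m → ZMod 2, ω ^ (kapv v) := by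
  unfold Asum Mset
  rw [Finset.sum_image (fun _ _ _ _ h => polyOf_inj m h)]
  refine Finset.sum_congr rfl fun v _ => ?_
  unfold chi kap kapv
  rw [polyOf_rev m v 0, polyOf_rev m v 1, polyOf_rev m v 2, polyOf_rev m v 3]

lemma Asum_zero (ω : ℂ) : Asum ω 0 = 1 := by
  rw [Asum_eq]
  simp [kapv, extv, kapN]

lemma Asum_small (ω : ℂ) (m : ℕ) (s : Multiset ℕ)
    (h : (Finset.univ : Finset (Fin m → ZMod 2)).val.map kapv = s) :
    Asum ω m = (s.map (fun k => ω ^ k)).sum := by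
  rw [Asum_eq, ← h, Multiset.map_map]
  rfl

lemma Asum_one (ω : ℂ) : Asum ω 1 = 1 + ω := by
  rw [Asum_small ω 1 {0, 1} (by decide)]
  simp

lemma Asum_two {ω : ℂ} : Asum ω 2 = 1 + ω + ω ^ 2 + ω ^ 7 := by
  rw [Asum_small ω 2 {0, 1, 2, 7} (by decide)]
  simp; ring

lemma Asum_three {ω : ℂ} (hω : ω ^ 8 = 1) :
    Asum ω 3 = 2 + 2 * ω ^ 2 + ω + ω ^ 3 + ω ^ 5 + ω ^ 7 := by
  rw [Asum_small ω 3 {0, 1, 2, 7, 0, 5, 2, 11} (by decide)]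
  simp; linear_combination (ω ^ 3) * hω

lemma Asum_vanish {ω : ℂ} (hω : ω = -1 ∨ ω ^ 2 = -1 ∨ ω ^ 4 = -1) {m : ℕ} (hm : 4 ≤ m) :
    Asum ω m = 0 := by
  have key : ∀ (t : Fin m), (∀ v : Fin m → ZMod 2, ω ^ kapv (v + Pi.single t 1) = - ω ^ kapv v) →
      Asum ω m = 0 := by
    intro t h
    rw [Asum_eq]
    have h1 := Equiv.sum_comp (Equiv.addRight (Pi.single t 1 : Fin m → ZMod 2))
      (fun v => ω ^ kapv v)
    simp only [Equiv.coe_addRight, h, Finset.sum_neg_distrib] at h1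
    linear_combination (-1 / 2) * h1
  have ext : ∀ (t : Fin m) (v : Fin m → ZMod 2) (k : ℕ), extv (v + Pi.single t 1) k
      = extv v k + if k = t.val then 1 else 0 := by
    intro t v k
    unfold extv
    by_cases h : k < m
    · simp only [h, dite_true, Pi.add_apply, Pi.single_apply, Fin.ext_iff]
    · have : k ≠ t.val := by have := t.2; omega
      simp [h, this]
  rcases hω with h | h | h
  · refine key ⟨0, by omega⟩ fun v => ?_
    unfold kapv
    simp only [ext]
    norm_num
    rw [pow_eq_of_mod (d := 2) (by rw [h]; norm_num) (kapN_flip1 _ _ _ _), pow_add, pow_one]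
    nth_rewrite 2 [h]
    ring
  · refine key ⟨1, by omega⟩ fun v => ?_
    unfold kapv
    simp only [ext]
    norm_num
    rw [pow_eq_of_mod (d := 4) (by linear_combination (ω ^ 2 - 1) * h) (kapN_flip2 _ _ _ _),
      pow_add, h]
    ring
  · refine key ⟨3, by omega⟩ fun v => ?_
    unfold kapv
    simp only [ext]
    norm_num
    rw [pow_eq_of_mod (d := 8) (by linear_combination (ω ^ 4 - 1) * h) (kapN_flip4 _ _ _ _),
      pow_add, h]
    ring
noncomputable def Irr (N : ℕ) : Finset (ZMod 2)[X] :=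
  ((Finset.Icc 1 N).biUnion Mset).filter Irreducible

lemma monic_of_ne {g : (ZMod 2)[X]} (h : g ≠ 0) : g.Monic := by
  have h1 : g.leadingCoeff ≠ 0 := leadingCoeff_ne_zero.mpr h
  have : ∀ x : ZMod 2, x ≠ 0 → x = 1 := by decide
  exact this _ h1

lemma mem_Irr {N : ℕ} {P : (ZMod 2)[X]} : P ∈ Irr N ↔ Irreducible P ∧ P.natDegree ≤ N := by
  unfold Irr
  simp only [Finset.mem_filter, Finset.mem_biUnion, Finset.mem_Icc, mem_Mset]
  constructor
  · rintro ⟨⟨m, hm, h1, h2⟩, h⟩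
    exact ⟨h, by omega⟩
  · rintro ⟨h, h2⟩
    exact ⟨⟨P.natDegree, ⟨h.natDegree_pos, h2⟩, monic_of_ne h.ne_zero, rfl⟩, h⟩

open UniqueFactorizationMonoid in
lemma degree_count {N m : ℕ} {g : (ZMod 2)[X]} (hg : g.Monic) (hgm : g.natDegree = m)
    (hm : m ≤ N) :
    ∑ P ∈ Irr N, ∑ k ∈ Finset.Icc 1 N, (if P ^ k ∣ g then P.natDegree else 0) = m := by
  have hg0 : g ≠ 0 := hg.ne_zero
  have key : ∀ P ∈ Irr N, ∑ k ∈ Finset.Icc 1 N, (if P ^ k ∣ g then P.natDegree else 0)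
      = (normalizedFactors g).count P * P.natDegree := by
    intro P hP
    obtain ⟨hP, hPN⟩ := mem_Irr.mp hP
    have hnorm : normalize P = P := (monic_of_ne hP.ne_zero).normalize_eq_self
    have hdv : ∀ k, P ^ k ∣ g ↔ k ≤ (normalizedFactors g).count P := by
      intro k
      rw [pow_dvd_iff_le_emultiplicity, emultiplicity_eq_count_normalizedFactors hP hg0, hnorm]
      exact_mod_cast Iff.rfl
    have hc : (normalizedFactors g).count P ≤ N := by
      have h1 := (hdv _).mpr le_rfl
      have h2 := natDegree_le_of_dvd h1 hg0
      rw [natDegree_pow] at h2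
      have := hP.natDegree_pos
      nlinarith
    simp only [hdv]
    rw [← Finset.sum_filter, Finset.sum_const]
    have : (Finset.Icc 1 N).filter (fun k => k ≤ (normalizedFactors g).count P)
        = Finset.Icc 1 ((normalizedFactors g).count P) := by
      ext k; simp only [Finset.mem_filter, Finset.mem_Icc]; omega
    rw [this]; simp
  rw [Finset.sum_congr rfl key]
  have hirr : ∀ P ∈ normalizedFactors g, Irreducible P := fun P h => irreducible_of_normalized_factor P h
  have hsub : (normalizedFactors g).toFinset ⊆ Irr N := by
    intro P hP
    rw [Multiset.mem_toFinset] at hP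
    rw [mem_Irr]
    refine ⟨hirr P hP, ?_⟩
    have := natDegree_le_of_dvd (dvd_of_mem_normalizedFactors hP) hg0
    omega
  rw [← Finset.sum_subset hsub]
  · have h1 := Finset.sum_multiset_map_count (normalizedFactors g) natDegree
    simp only [smul_eq_mul] at h1
    rw [← h1, ← natDegree_multiset_prod]
    · have h2 : (normalizedFactors g).prod = g := by
        have h3 := prod_normalizedFactors hg0
        have h4 : (normalizedFactors g).prod ≠ 0 := by
          intro h; rw [h] at h3; exact hg0 (h3.symm.eq_zero_iff.mpr rfl)
        exact eq_of_monic_of_associated (monic_of_ne h4) hg h3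
      rw [h2, hgm]
    · intro h
      exact (hirr 0 h).ne_zero rfl
  · intro P _ hP
    rw [Multiset.mem_toFinset] at hP
    rw [Multiset.count_eq_zero_of_notMem hP, zero_mul]

lemma sum_dvd {ω : ℂ} (hω : ω ^ 8 = 1) {Q : (ZMod 2)[X]} (hQ : Q.Monic) (m : ℕ) :
    ∑ g ∈ Mset m, (if Q ∣ g then chi ω g else 0)
      = if Q.natDegree ≤ m then chi ω Q * Asum ω (m - Q.natDegree) else 0 := by
  split_ifs with h
  · rw [← Finset.sum_filter, Asum, Finset.mul_sum]
    symm
    apply Finset.sum_bij (fun g _ => Q * g)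
    · intro g hg
      obtain ⟨h1, h2⟩ := mem_Mset.mp hg
      rw [Finset.mem_filter, mem_Mset]
      refine ⟨⟨hQ.mul h1, ?_⟩, dvd_mul_right _ _⟩
      rw [hQ.natDegree_mul h1]; omega
    · intro a _ b _ hab
      exact mul_left_cancel₀ hQ.ne_zero hab
    · intro b hb
      obtain ⟨hb, c, rfl⟩ := Finset.mem_filter.mp hb
      obtain ⟨h1, h2⟩ := mem_Mset.mp hb
      have hc : c.Monic := by
        apply monic_of_ne
        rintro rfl
        exact h1.ne_zero (mul_zero _)
      refine ⟨c, mem_Mset.mpr ⟨hc, ?_⟩, rfl⟩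
      rw [hQ.natDegree_mul hc] at h2
      omega
    · intro g hg
      rw [chi_mul hω hQ (mem_Mset.mp hg).1]
  · apply Finset.sum_eq_zero
    intro g hg
    obtain ⟨h1, h2⟩ := mem_Mset.mp hg
    rw [if_neg]
    intro hd
    have := natDegree_le_of_dvd hd h1.ne_zero
    omega

noncomputable def Lsum (ω : ℂ) (N m : ℕ) : ℂ :=
  ∑ P ∈ Irr N, ∑ k ∈ Finset.Icc 1 N,
    if k * P.natDegree = m then (P.natDegree : ℂ) * chi ω P ^ k else 0

lemma newton {ω : ℂ} (hω : ω ^ 8 = 1) {N m : ℕ} (hm : m ≤ N) :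
    (m : ℂ) * Asum ω m = ∑ j ∈ Finset.Icc 1 m, Lsum ω N j * Asum ω (m - j) := by
  have e1 : (m : ℂ) * Asum ω m = ∑ g ∈ Mset m, ∑ P ∈ Irr N, ∑ k ∈ Finset.Icc 1 N,
      (P.natDegree : ℂ) * (if P ^ k ∣ g then chi ω g else 0) := by
    rw [Asum, Finset.mul_sum]
    apply Finset.sum_congr rfl
    intro g hg
    obtain ⟨h1, h2⟩ := mem_Mset.mp hg
    have h3 := congrArg (Nat.cast : ℕ → ℂ) (degree_count h1 h2 hm)
    push_cast at h3
    rw [← h3, Finset.sum_mul]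
    apply Finset.sum_congr rfl
    intro P _
    rw [Finset.sum_mul]
    apply Finset.sum_congr rfl
    intro k _
    split_ifs <;> simp
  rw [e1, Finset.sum_comm]
  have e2 : ∀ P ∈ Irr N, ∑ g ∈ Mset m, ∑ k ∈ Finset.Icc 1 N,
      (P.natDegree : ℂ) * (if P ^ k ∣ g then chi ω g else 0)
      = ∑ k ∈ Finset.Icc 1 N, ∑ j ∈ Finset.Icc 1 m,
        (if k * P.natDegree = j then (P.natDegree : ℂ) * chi ω P ^ k else 0) * Asum ω (m - j) := by
    intro P hP
    obtain ⟨hP, hPN⟩ := mem_Irr.mp hP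
    have hPm := monic_of_ne hP.ne_zero
    rw [Finset.sum_comm]
    apply Finset.sum_congr rfl
    intro k hk
    rw [← Finset.mul_sum, sum_dvd hω (hPm.pow k), hPm.natDegree_pow, chi_pow hω hPm]
    simp only [ite_mul, zero_mul]
    rw [Finset.sum_ite_eq]
    have : k * P.natDegree ∈ Finset.Icc 1 m ↔ k * P.natDegree ≤ m := by
      rw [Finset.mem_Icc]
      have h1 := hP.natDegree_pos
      have h2 := (Finset.mem_Icc.mp hk).1
      have := Nat.mul_pos h2 h1
      omega
    simp only [this]
    split_ifs
    · ring
    · simp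
  rw [Finset.sum_congr rfl e2]
  simp only [Lsum, Finset.sum_mul]
  rw [Finset.sum_comm (s := Finset.Icc 1 m)]
  apply Finset.sum_congr rfl
  intro P _
  rw [Finset.sum_comm]

lemma Lsum_eq {ω : ℂ} (hω : ω = -1 ∨ ω ^ 2 = -1 ∨ ω ^ 4 = -1) {N : ℕ} {r1 r2 r3 : ℂ}
    (h1 : Asum ω 1 = -(r1 + r2 + r3)) (h2 : Asum ω 2 = r1 * r2 + r1 * r3 + r2 * r3)
    (h3 : Asum ω 3 = -(r1 * r2 * r3)) :
    ∀ m, 1 ≤ m → m ≤ N → Lsum ω N m = -(r1 ^ m + r2 ^ m + r3 ^ m) := by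
  have hω8 : ω ^ 8 = 1 := by
    rcases hω with h | h | h
    · rw [h]; norm_num
    · rw [show ω ^ 8 = (ω ^ 2) ^ 4 by ring, h]; norm_num
    · rw [show ω ^ 8 = (ω ^ 4) ^ 2 by ring, h]; norm_num
  intro m
  induction m using Nat.strong_induction_on with
  | _ m ih =>
    intro hm1 hmN
    have hN := newton hω8 hmN
    match m, ih, hm1, hmN, hN with
    | 1, ih, hm1, hmN, hN =>
      simp [Asum_zero] at hN
      rw [← hN, h1]; ring
    | 2, ih, hm1, hmN, hN =>
      rw [Finset.sum_Icc_succ_top (by norm_num)] at hN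
      simp [Asum_zero] at hN
      rw [ih 1 (by norm_num) le_rfl (by omega), h1, h2] at hN
      linear_combination -hN
    | 3, ih, hm1, hmN, hN =>
      rw [Finset.sum_Icc_succ_top (by norm_num), Finset.sum_Icc_succ_top (by norm_num)] at hN
      simp [Asum_zero] at hN
      rw [ih 1 (by norm_num) le_rfl (by omega), ih 2 (by norm_num) (by norm_num) (by omega),
        h1, h2, h3] at hN
      linear_combination -hN
    | k + 4, ih, hm1, hmN, hN =>
      rw [Asum_vanish hω (by omega), Finset.sum_Icc_succ_top (by omega),
        Finset.sum_Icc_succ_top (by omega), Finset.sum_Icc_succ_top (by omega)] at hN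
      have hz : ∀ j ∈ Finset.Icc 1 k, Lsum ω N j * Asum ω (k + 4 - j) = 0 := by
        intro j hj
        rw [Finset.mem_Icc] at hj
        rw [Asum_vanish hω (by omega), mul_zero]
      rw [Finset.sum_Icc_succ_top (by omega), Finset.sum_eq_zero hz] at hN
      rw [show k + 4 - (k + 1) = 3 by omega, show k + 4 - (k + 1 + 1) = 2 by omega,
        show k + 4 - (k + 1 + 1 + 1) = 1 by omega, show k + 4 - (k + 1 + 1 + 1 + 1) = 0 by omega,
        Asum_zero, h1, h2, h3, ih (k + 1) (by omega) (by omega) (by omega),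
        ih (k + 1 + 1) (by omega) (by omega) (by omega),
        ih (k + 1 + 1 + 1) (by omega) (by omega) (by omega)] at hN
      rw [show k + 1 + 1 + 1 + 1 = k + 4 by omega] at hN
      linear_combination -hN
section FaSec
set_option linter.unusedSectionVars false
variable {n : ℕ} {K : Type} [Field K] [CharP K 2] [Algebra (ZMod 2) K]

noncomputable def Pa (n : ℕ) {K : Type} [Field K] (a : K) : K[X] :=
  ∏ i ∈ Finset.range n, (X + C (a ^ (2 ^ i)))

lemma Pa_frob [Fintype K] (hK : Fintype.card K = 2 ^ n) (a : K) :
    (Pa n a).map (frobenius K 2) = Pa n a := by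
  unfold Pa
  rw [Polynomial.map_prod]
  have h1 : ∀ i, (X + C (a ^ (2 ^ i)) : K[X]).map (frobenius K 2) = X + C (a ^ (2 ^ (i + 1))) := by
    intro i
    rw [Polynomial.map_add, map_X, map_C, frobenius_def, ← pow_mul, ← pow_succ]
  simp_rw [h1]
  rcases n with _ | m
  · simp
  rw [Finset.prod_range_succ, Finset.prod_range_succ', ← hK, FiniteField.pow_card]
  simp

lemma Pa_lift [Fintype K] (hK : Fintype.card K = 2 ^ n) (a : K) :
    ∃ f : (ZMod 2)[X], f.map (algebraMap (ZMod 2) K) = Pa n a := by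
  rw [← mem_lifts, lifts_iff_coeff_lifts]
  intro k
  have h := congrArg (fun p => p.coeff k) (Pa_frob hK a)
  simp only [coeff_map, frobenius_def] at h
  have h2 : (Pa n a).coeff k * ((Pa n a).coeff k - 1) = 0 := by linear_combination h
  rcases mul_eq_zero.mp h2 with h3 | h3
  · exact ⟨0, by rw [h3, map_zero]⟩
  · exact ⟨1, by rw [map_one]; linear_combination -h3⟩

noncomputable def fa [Fintype K] (hK : Fintype.card K = 2 ^ n) (a : K) : (ZMod 2)[X] :=
  (Pa_lift hK a).choose

lemma fa_map [Fintype K] (hK : Fintype.card K = 2 ^ n) (a : K) :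
    (fa hK a).map (algebraMap (ZMod 2) K) = Pa n a := (Pa_lift hK a).choose_spec

lemma Pa_monic (a : K) : (Pa n a).Monic := monic_prod_of_monic _ _ fun _ _ => monic_X_add_C _

lemma Pa_natDegree (a : K) : (Pa n a).natDegree = n := by
  unfold Pa
  rw [natDegree_prod_of_monic _ _ fun _ _ => monic_X_add_C _]
  simp only [natDegree_X_add_C, Finset.sum_const, Finset.card_range, smul_eq_mul, mul_one]

lemma fa_natDegree [Fintype K] (hK : Fintype.card K = 2 ^ n) (a : K) :
    (fa hK a).natDegree = n := by
  rw [← natDegree_map (algebraMap (ZMod 2) K), fa_map, Pa_natDegree]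

lemma fa_ne_zero [Fintype K] (hK : Fintype.card K = 2 ^ n) (a : K) : fa hK a ≠ 0 := by
  intro h
  have := fa_map hK a
  rw [h, Polynomial.map_zero] at this
  exact (Pa_monic (n := n) a).ne_zero this.symm

lemma fa_rev [Fintype K] (hK : Fintype.card K = 2 ^ n) (a : K) {k : ℕ} (hk : k ≤ n) :
    algebraMap (ZMod 2) K ((fa hK a).reverse.coeff k) = traceFn 2 n k a := by
  rw [coeff_reverse, fa_natDegree, revAt_le hk, ← coeff_map, fa_map]
  unfold Pa traceFn
  rw [Finset.prod_X_add_C_coeff _ _ (by simp)]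
  rw [Finset.card_range, Nat.sub_sub_self hk]

lemma aeval_pow_two (P : (ZMod 2)[X]) (a : K) (i : ℕ) :
    aeval (a ^ (2 ^ i)) P = (aeval a P) ^ (2 ^ i) := by
  induction i with
  | zero => simp
  | succ i ih =>
    rw [pow_succ, pow_mul, pow_mul, ← ih, ← expand_aeval, ZMod.expand_card, map_pow]

lemma fa_factor [Fintype K] (hK : Fintype.card K = 2 ^ n) (a : K) {P : (ZMod 2)[X]}
    (hP : Irreducible P) (hd : P ∣ fa hK a) : P = minpoly (ZMod 2) a := by
  have h1 : P.map (algebraMap (ZMod 2) K) ∣ Pa n a := by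
    rw [← fa_map hK]; exact Polynomial.map_dvd _ hd
  have hs : (Pa n a).Splits := by
    unfold Pa
    exact Splits.prod fun i _ => Splits.X_add_C _
  have h2 := hs.of_dvd (Pa_monic a).ne_zero h1
  obtain ⟨b, hb⟩ := h2.exists_eval_eq_zero (by
    rw [degree_map]; exact (degree_pos_of_irreducible hP).ne')
  have h3 : (Pa n a).eval b = 0 := by
    obtain ⟨c, hc⟩ := h1
    rw [hc, eval_mul, hb, zero_mul]
  unfold Pa at h3
  rw [eval_prod, Finset.prod_eq_zero_iff] at h3
  obtain ⟨i, _, hi⟩ := h3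
  simp only [eval_add, eval_X, eval_C] at hi
  have hb2 : b = a ^ (2 ^ i) := by
    have h2 : (2 : K) = 0 := CharTwo.two_eq_zero
    linear_combination hi - a ^ (2 ^ i) * h2
  rw [hb2, eval_map_algebraMap, aeval_pow_two] at hb
  have h4 : aeval a P = 0 := by
    exact pow_eq_zero_iff (by positivity) |>.mp hb
  exact minpoly.eq_of_irreducible_of_monic hP h4 (monic_of_ne hP.ne_zero)

open UniqueFactorizationMonoid in
lemma fa_eq [Fintype K] (hK : Fintype.card K = 2 ^ n) (a : K) :
    ∃ k, fa hK a = (minpoly (ZMod 2) a) ^ k ∧ k * (minpoly (ZMod 2) a).natDegree = n := by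
  have h0 := fa_ne_zero hK a
  have h1 : normalizedFactors (fa hK a)
      = Multiset.replicate (Multiset.card (normalizedFactors (fa hK a))) (minpoly (ZMod 2) a) := by
    rw [Multiset.eq_replicate]
    refine ⟨rfl, fun P hP => ?_⟩
    exact fa_factor hK a (irreducible_of_normalized_factor P hP) (dvd_of_mem_normalizedFactors hP)
  have h3 := prod_normalizedFactors h0
  have hm : (minpoly (ZMod 2) a).Monic := minpoly.monic (Algebra.IsIntegral.isIntegral a)
  rw [h1, Multiset.prod_replicate] at h3
  have h4 := eq_of_monic_of_associated (hm.pow _) (monic_of_ne h0) h3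
  refine ⟨_, h4.symm, ?_⟩
  rw [← hm.natDegree_pow, h4, fa_natDegree]

lemma card_fiber [Fintype K] (hK : Fintype.card K = 2 ^ n) {P : (ZMod 2)[X]}
    (hP : Irreducible P) (hd : P.natDegree ∣ n) :
    (Finset.univ.filter (fun a : K => minpoly (ZMod 2) a = P)).card = P.natDegree := by
  have hPm := monic_of_ne hP.ne_zero
  have hdv := hP.natDegree_dvd_iff_dvd_X_pow_card_pow_sub_X.mp hd
  rw [Nat.card_zmod, ← hK] at hdv
  have hsp : (X ^ Fintype.card K - X : K[X]).Splits := by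
    rw [splits_iff_card_roots, FiniteField.roots_X_pow_card_sub_X,
      FiniteField.X_pow_card_sub_X_natDegree_eq K Fintype.one_lt_card]
    rfl
  have h1 := Polynomial.map_dvd (algebraMap (ZMod 2) K) hdv
  rw [Polynomial.map_sub, Polynomial.map_pow, map_X] at h1
  have hs := hsp.of_dvd (FiniteField.X_pow_card_sub_X_ne_zero K Fintype.one_lt_card) h1
  have hc := card_rootSet_eq_natDegree (K := K) (PerfectField.separable_of_irreducible hP) hs
  rw [← hc, ← Set.toFinset_card]
  congr 1
  ext a
  simp only [Finset.mem_filter, Finset.mem_univ, true_and, Set.mem_toFinset, mem_rootSet]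
  constructor
  · rintro rfl
    exact ⟨hP.ne_zero, minpoly.aeval _ _⟩
  · rintro ⟨_, h⟩
    exact (minpoly.eq_of_irreducible_of_monic hP h hPm).symm

lemma sum_chi_fa [Fintype K] (hK : Fintype.card K = 2 ^ n) (hn : 1 ≤ n) {ω : ℂ} (hω : ω ^ 8 = 1) :
    ∑ a : K, chi ω (fa hK a) = Lsum ω n n := by
  have hirr : ∀ a : K, Irreducible (minpoly (ZMod 2) a) := fun a =>
    minpoly.irreducible (Algebra.IsIntegral.isIntegral a)
  have hmem : ∀ a ∈ (Finset.univ : Finset K), minpoly (ZMod 2) a ∈ Irr n := by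
    intro a _
    obtain ⟨k, _, hk⟩ := fa_eq hK a
    rw [mem_Irr]
    exact ⟨hirr a, Nat.le_of_dvd hn ⟨k, by rw [mul_comm]; exact hk.symm⟩⟩
  rw [← Finset.sum_fiberwise_of_maps_to hmem, Lsum]
  apply Finset.sum_congr rfl
  intro P hP
  obtain ⟨hP, hPN⟩ := mem_Irr.mp hP
  have hPm := monic_of_ne hP.ne_zero
  have hpos := hP.natDegree_pos
  by_cases hd : P.natDegree ∣ n
  · obtain ⟨k0, hk0⟩ := hd
    have e1 : ∀ a ∈ Finset.univ.filter (fun a : K => minpoly (ZMod 2) a = P),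
        chi ω (fa hK a) = chi ω P ^ k0 := by
      intro a ha
      have ha := (Finset.mem_filter.mp ha).2
      obtain ⟨k, hk1, hk⟩ := fa_eq hK a
      rw [ha] at hk1 hk
      have : k = k0 := by
        apply Nat.eq_of_mul_eq_mul_right hpos
        rw [hk, hk0, mul_comm]
      rw [hk1, chi_pow hω hPm, this]
    rw [Finset.sum_congr rfl e1, Finset.sum_const, card_fiber hK hP ⟨k0, hk0⟩, nsmul_eq_mul]
    rw [Finset.sum_eq_single k0]
    · rw [if_pos (by rw [mul_comm]; exact hk0.symm)]
    · intro k _ hk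
      rw [if_neg]
      intro h
      apply hk
      apply Nat.eq_of_mul_eq_mul_right hpos
      rw [h, mul_comm]; exact hk0
    · intro h
      exfalso
      apply h
      rw [Finset.mem_Icc]
      constructor
      · rcases k0 with _ | k0
        · omega
        · omega
      · nlinarith
  · rw [Finset.sum_eq_zero, Finset.sum_eq_zero]
    · intro k _
      rw [if_neg]
      intro h
      exact hd ⟨k, by rw [mul_comm]; exact h.symm⟩
    · intro a ha
      exfalso
      have ha := (Finset.mem_filter.mp ha).2
      obtain ⟨k, hk1, hk⟩ := fa_eq hK a
      rw [ha] at hk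
      exact hd ⟨k, by rw [mul_comm]; exact hk.symm⟩

end FaSec
noncomputable def rhoC (n : ℕ) (γ : ℂ[X]) : ℂ := (γ.roots.map (· ^ n)).sum

lemma rhoC_mul (n : ℕ) {p q : ℂ[X]} (h : p * q ≠ 0) : rhoC n (p * q) = rhoC n p + rhoC n q := by
  unfold rhoC
  rw [roots_mul h, Multiset.map_add, Multiset.sum_add]

lemma rhoC_X_pow (n k : ℕ) (hn : 1 ≤ n) : rhoC n (X ^ k) = 0 := by
  unfold rhoC
  rw [roots_pow, roots_X, Multiset.map_nsmul, Multiset.sum_nsmul, Multiset.map_singleton,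
    Multiset.sum_singleton, zero_pow (by omega), smul_zero]

noncomputable def gam (ω : ℂ) : Cubic ℂ :=
  ⟨1, 1 + ω, 1 + ω + ω ^ 2 + ω ^ 7, 2 + 2 * ω ^ 2 + ω + ω ^ 3 + ω ^ 5 + ω ^ 7⟩

lemma gam_ne_zero (ω : ℂ) : (gam ω).toPoly ≠ 0 :=
  Cubic.ne_zero_of_a_ne_zero (by simp [gam])

lemma Lsum_rho {ω : ℂ} (hω : ω = -1 ∨ ω ^ 2 = -1 ∨ ω ^ 4 = -1) {n : ℕ} (hn : 1 ≤ n) :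
    Lsum ω n n = - rhoC n (gam ω).toPoly := by
  have hω8 : ω ^ 8 = 1 := by
    rcases hω with h | h | h
    · rw [h]; norm_num
    · rw [show ω ^ 8 = (ω ^ 2) ^ 4 by ring, h]; norm_num
    · rw [show ω ^ 8 = (ω ^ 4) ^ 2 by ring, h]; norm_num
  have ha : (gam ω).a ≠ 0 := by simp [gam]
  have hs : Splits ((gam ω).toPoly.map (RingHom.id ℂ)) := IsAlgClosed.splits _
  obtain ⟨x, y, z, h3⟩ := (Cubic.splits_iff_roots_eq_three ha).mp hs
  have hb := Cubic.b_eq_three_roots ha h3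
  have hc := Cubic.c_eq_three_roots ha h3
  have hd := Cubic.d_eq_three_roots ha h3
  have h4 : (gam ω).toPoly.roots = {x, y, z} := by
    rw [← h3, Cubic.map_roots, Polynomial.map_id]
  simp only [RingHom.id_apply, gam, one_mul] at hb hc hd
  rw [Lsum_eq hω (r1 := x) (r2 := y) (r3 := z) (by rw [Asum_one]; exact hb)
    (by rw [Asum_two]; exact hc) (by rw [Asum_three hω8, hd]) n hn le_rfl]
  unfold rhoC
  rw [h4]
  simp [add_assoc]

lemma gam4 : (gam (-1)).toPoly = X ^ 3 := by
  unfold gam Cubic.toPoly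
  norm_num

lemma gam26 {i : ℂ} (hi : i ^ 2 = -1) :
    (gam i).toPoly * (gam (-i)).toPoly = X ^ 4 * d21.map (Int.castRingHom ℂ) := by
  have h : (C i) ^ 2 = (-1 : ℂ[X]) := by rw [← C_pow, hi]; simp
  unfold gam Cubic.toPoly d21
  simp only [C_add, C_mul, C_pow, C_neg, C_1, Polynomial.map_add, Polynomial.map_mul,
    Polynomial.map_pow, map_X, Polynomial.map_ofNat, show (C 2 : ℂ[X]) = 2 from rfl]
  generalize C i = z at *
  grind

lemma gam1357 {w : ℂ} (hw : w ^ 4 = -1) :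
    ((gam w).toPoly * (gam (-w)).toPoly) * ((gam (w ^ 3)).toPoly * (gam (-w ^ 3)).toPoly)
      = (d22.map (Int.castRingHom ℂ) * d22.map (Int.castRingHom ℂ))
        * d81.map (Int.castRingHom ℂ) := by
  have h : (C w) ^ 4 = (-1 : ℂ[X]) := by rw [← C_pow, hw]; simp
  unfold gam Cubic.toPoly d22 d81
  simp only [C_add, C_mul, C_pow, C_neg, C_1, Polynomial.map_add, Polynomial.map_mul,
    Polynomial.map_pow, map_X, Polynomial.map_ofNat, show (C 2 : ℂ[X]) = 2 from rfl]
  generalize C w = z at *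
  grind
lemma final_count (n : ℕ) (hn : 5 ≤ n)
    (K : Type) [Field K] [Fintype K] [CharP K 2] [Algebra (ZMod 2) K]
    (hK : Fintype.card K = 2 ^ n) {ζ : ℂ} (hζ : IsPrimitiveRoot ζ 8) :
    8 * (Nat.card {a : K // (32 : ℤ) ∣ kloosterman n K a} : ℂ)
      = ∑ j ∈ Finset.range 8, ∑ a : K, chi (ζ ^ j) (fa hK a) := by
  have h8 : ζ ^ 8 = 1 := hζ.pow_eq_one
  have hinj : Function.Injective (algebraMap (ZMod 2) K) := (algebraMap (ZMod 2) K).injective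
  have e : ∀ a : K, ∑ j ∈ Finset.range 8, chi (ζ ^ j) (fa hK a)
      = if (32 : ℤ) ∣ kloosterman n K a then 8 else 0 := by
    intro a
    have hiff : (32 : ℤ) ∣ kloosterman n K a ↔ 8 ∣ kap (fa hK a).reverse := by
      rw [klo_iff hn hK, kap, kapN_zero, ← fa_rev hK a (by omega : 1 ≤ n),
        ← fa_rev hK a (by omega : 2 ≤ n), ← fa_rev hK a (by omega : 4 ≤ n)]
      simp only [map_eq_zero_iff _ hinj]
    simp only [hiff]
    unfold chi
    simp only [← pow_mul, mul_comm _ (kap (fa hK a).reverse)]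
    simp only [pow_mul]
    split_ifs with h
    · rw [(hζ.pow_eq_one_iff_dvd _).mpr h]
      simp
    · have h1 : ζ ^ (kap (fa hK a).reverse) ≠ 1 := fun h' => h ((hζ.pow_eq_one_iff_dvd _).mp h')
      have h2 := geom_sum_mul (ζ ^ (kap (fa hK a).reverse)) 8
      rw [← pow_mul, mul_comm _ 8, pow_mul, h8, one_pow, sub_self] at h2
      exact (mul_eq_zero.mp h2).resolve_right (sub_ne_zero.mpr h1)
  rw [Finset.sum_comm, Finset.sum_congr rfl fun a _ => e a, ← Finset.sum_filter, Finset.sum_const,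
    Nat.card_eq_fintype_card, Fintype.card_subtype, nsmul_eq_mul, mul_comm]

theorem statement17 (n : ℕ) (hn : 5 ≤ n)
    (K : Type) [Field K] [Fintype K] (hK : Fintype.card K = 2 ^ n) :
    (Nat.card {a : K // (32 : ℤ) ∣ kloosterman n K a} : ℂ)
      = 2 ^ (n - 3) - (1 / 8) * (rho n d21 + 2 * rho n d22 + rho n d81) := by
  haveI : Fact (Nat.Prime 2) := ⟨Nat.prime_two⟩
  haveI : CharP K 2 := charP_of_card_eq_prime_pow hK
  letI : Algebra (ZMod 2) K := ZMod.algebra K 2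
  obtain ⟨ζ, hζ⟩ : ∃ ζ : ℂ, IsPrimitiveRoot ζ 8 :=
    ⟨_, Complex.isPrimitiveRoot_exp 8 (by norm_num)⟩
  have h8 : ζ ^ 8 = 1 := hζ.pow_eq_one
  have h4 : ζ ^ 4 = -1 := by
    have h1 : ζ ^ 4 ≠ 1 := hζ.pow_ne_one_of_pos_of_lt (by norm_num) (by norm_num)
    have h2 : (ζ ^ 4 - 1) * (ζ ^ 4 + 1) = 0 := by linear_combination h8
    have h3 := (mul_eq_zero.mp h2).resolve_left (sub_ne_zero.mpr h1)
    linear_combination h3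
  have hn1 : 1 ≤ n := by omega
  have hS : ∀ ω : ℂ, (ω = -1 ∨ ω ^ 2 = -1 ∨ ω ^ 4 = -1) →
      ∑ a : K, chi ω (fa hK a) = - rhoC n (gam ω).toPoly := by
    intro ω hω
    have hω8 : ω ^ 8 = 1 := by
      rcases hω with h | h | h
      · rw [h]; norm_num
      · rw [show ω ^ 8 = (ω ^ 2) ^ 4 by ring, h]; norm_num
      · rw [show ω ^ 8 = (ω ^ 4) ^ 2 by ring, h]; norm_num
    rw [sum_chi_fa hK hn1 hω8, Lsum_rho hω hn1]
  have hS1 : ∑ a : K, chi 1 (fa hK a) = 2 ^ n := by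
    simp [chi, hK]
  have hz2 : (ζ ^ 2) ^ 2 = -1 := by rw [← h4]; ring
  have r4 : rhoC n (gam (-1)).toPoly = 0 := by rw [gam4, rhoC_X_pow n 3 hn1]
  have r26 : rhoC n (gam (ζ ^ 2)).toPoly + rhoC n (gam (-ζ ^ 2)).toPoly = rho n d21 := by
    have hne := mul_ne_zero (gam_ne_zero (ζ ^ 2)) (gam_ne_zero (-ζ ^ 2))
    rw [← rhoC_mul n hne]
    rw [gam26 hz2] at hne ⊢
    rw [rhoC_mul n hne, rhoC_X_pow n 4 hn1, zero_add]
    rfl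
  have r1357 : (rhoC n (gam ζ).toPoly + rhoC n (gam (-ζ)).toPoly)
      + (rhoC n (gam (ζ ^ 3)).toPoly + rhoC n (gam (-ζ ^ 3)).toPoly)
      = 2 * rho n d22 + rho n d81 := by
    have ha := mul_ne_zero (gam_ne_zero ζ) (gam_ne_zero (-ζ))
    have hb := mul_ne_zero (gam_ne_zero (ζ ^ 3)) (gam_ne_zero (-ζ ^ 3))
    have hne := mul_ne_zero ha hb
    rw [← rhoC_mul n ha, ← rhoC_mul n hb, ← rhoC_mul n hne]
    rw [gam1357 h4] at hne ⊢
    rw [rhoC_mul n hne, rhoC_mul n (left_ne_zero_of_mul hne), two_mul]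
    rfl
  have hF := final_count n hn K hK hζ
  simp only [Finset.sum_range_succ, Finset.sum_range_zero, zero_add, pow_zero, pow_one] at hF
  rw [show ζ ^ 5 = -ζ by linear_combination ζ * h4,
    show ζ ^ 6 = -ζ ^ 2 by linear_combination ζ ^ 2 * h4,
    show ζ ^ 7 = -ζ ^ 3 by linear_combination ζ ^ 3 * h4, h4, hS1,
    hS (-1) (Or.inl rfl), hS (ζ ^ 2) (Or.inr (Or.inl hz2)),
    hS (-ζ ^ 2) (Or.inr (Or.inl (by rw [← hz2]; ring))),
    hS ζ (Or.inr (Or.inr h4)), hS (-ζ) (Or.inr (Or.inr (by rw [← h4]; ring))),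
    hS (ζ ^ 3) (Or.inr (Or.inr (by linear_combination (ζ ^ 8 - ζ ^ 4 + 1) * h4))),
    hS (-ζ ^ 3) (Or.inr (Or.inr (by linear_combination (ζ ^ 8 - ζ ^ 4 + 1) * h4)))] at hF
  have hp : (2 : ℂ) ^ n = 8 * 2 ^ (n - 3) := by
    rw [show (8 : ℂ) = 2 ^ 3 by norm_num, ← pow_add]
    congr 1
    omega
  rw [hp] at hF
  linear_combination (1 / 8) * hF - (1 / 8) * r4 - (1 / 8) * r26 - (1 / 8) * r1357
end

section
/- Let f be a monic polynomial of degree m ≥ 4 over the field F_2 = ZMod 2, and for a monic polynomial g over F_2 and k ≥ 1 write T_k(g) for the coefficient of x^{deg g − k} in g. Then for every integer d ≥ 1: (1) T_1(f^d) = d·T_1(f); (2) T_2(f^d) = C(d,2)·T_1(f) + d·T_2(f); (3) T_3(f^d) = C(d,3)·T_1(f) + d·T_3(f); (4) T_4(f^d) = C(d,4)·T_1(f) + C(d,2)·T_2(f) + d·T_4(f) + (d−2)·C(d,2)·T_1(f)·T_2(f); here C(d,k) denotes the binomial coefficient, and all integer scalars act on F_2 through the natural ℤ-module structure (i.e. are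 reduced modulo 2, with (d−2)·C(d,2) computed in ℤ before reduction). -/
/-- For a monic polynomial `g` over `F_2` and `k ≥ 1`, `Tc k g` is the coefficient of
`x^(deg g − k)` in `g`. -/
noncomputable def Tc (k : ℕ) (g : Polynomial (ZMod 2)) : ZMod 2 :=
  g.coeff (g.natDegree - k)

theorem rev_pow_aux (R : Polynomial (ZMod 2)) (h0 : R.coeff 0 = 1) (d : ℕ) :
    (R ^ d).coeff 0 = 1 ∧
    (R ^ d).coeff 1 = (d : ZMod 2) * R.coeff 1 ∧
    (R ^ d).coeff 2 = (d.choose 2 : ZMod 2) * R.coeff 1 + (d : ZMod 2) * R.coeff 2 ∧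
    (R ^ d).coeff 3 = (d.choose 3 : ZMod 2) * R.coeff 1 + (d : ZMod 2) * R.coeff 3 ∧
    (R ^ d).coeff 4 = (d.choose 4 : ZMod 2) * R.coeff 1 + (d.choose 2 : ZMod 2) * R.coeff 2
        + (d : ZMod 2) * R.coeff 4
        + ((d : ZMod 2) * (d.choose 2 : ZMod 2)) * (R.coeff 1 * R.coeff 2) := by
  induction d with
  | zero => simp [Polynomial.coeff_one]
  | succ n ih =>
    obtain ⟨i0, i1, i2, i3, i4⟩ := ih
    have c2 : (n + 1).choose 2 = n + n.choose 2 := by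
      rw [Nat.choose_succ_succ' n 1, Nat.choose_one_right]
    have c3 : (n + 1).choose 3 = n.choose 2 + n.choose 3 := Nat.choose_succ_succ' n 2
    have c4 : (n + 1).choose 4 = n.choose 3 + n.choose 4 := Nat.choose_succ_succ' n 3
    simp only [pow_succ, Polynomial.coeff_mul, Finset.Nat.sum_antidiagonal_eq_sum_range_succ_mk,
      Finset.sum_range_succ, Finset.sum_range_zero, i0, i1, i2, i3, i4, h0, c2, c3, c4,
      Nat.cast_add, Nat.cast_one, Nat.sub_zero, Nat.sub_self, Nat.reduceSub]
    generalize (n : ZMod 2) = x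
    generalize (n.choose 2 : ZMod 2) = y
    generalize (n.choose 3 : ZMod 2) = z
    generalize (n.choose 4 : ZMod 2) = w
    generalize R.coeff 1 = a
    generalize R.coeff 2 = b
    generalize R.coeff 3 = c
    generalize R.coeff 4 = e
    refine ⟨by ring, ?_, ?_, ?_, ?_⟩
    · ring
    · revert x y a b; decide
    · revert x y z a b c; decide
    · have ha : a * a = a := by revert a; decide
      have hb : b * b = b := by revert b; decide
      have hx : x * x = x := by revert x; decide
      have h2 : (2 : ZMod 2) = 0 := by decide
      linear_combination z * ha + x * hb - a * b * hx + (x * a * c - x * a * b) * h2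

theorem Tc_eq_rev (k : ℕ) (g : Polynomial (ZMod 2)) (hk : k ≤ g.natDegree) :
    Tc k g = g.reverse.coeff k := by
  rw [Polynomial.coeff_reverse, Polynomial.revAt_le hk, Tc]

theorem rev_pow (f : Polynomial (ZMod 2)) (d : ℕ) : (f ^ d).reverse = f.reverse ^ d := by
  induction d with
  | zero => simpa using Polynomial.reverse_C (1 : ZMod 2)
  | succ n ih => rw [pow_succ, Polynomial.reverse_mul_of_domain, ih, pow_succ]

theorem statement18 (m : ℕ) (hm : 4 ≤ m) (f : Polynomial (ZMod 2)) (hf : f.Monic)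
    (hdeg : f.natDegree = m) (d : ℕ) (hd : 1 ≤ d) :
    (Tc 1 (f ^ d) = (d : ZMod 2) * Tc 1 f) ∧
    (Tc 2 (f ^ d) = (d.choose 2 : ZMod 2) * Tc 1 f + (d : ZMod 2) * Tc 2 f) ∧
    (Tc 3 (f ^ d) = (d.choose 3 : ZMod 2) * Tc 1 f + (d : ZMod 2) * Tc 3 f) ∧
    (Tc 4 (f ^ d) = (d.choose 4 : ZMod 2) * Tc 1 f + (d.choose 2 : ZMod 2) * Tc 2 f
        + (d : ZMod 2) * Tc 4 f
        + ((((d : ℤ) - 2) * (d.choose 2 : ℤ) : ℤ) : ZMod 2) * (Tc 1 f * Tc 2 f)) := by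
  have h0 : f.reverse.coeff 0 = 1 := by
    rw [Polynomial.coeff_zero_reverse]; exact hf
  have hD : 4 ≤ (f ^ d).natDegree := by
    rw [hf.natDegree_pow, hdeg]; nlinarith
  have hF : 4 ≤ f.natDegree := by omega
  obtain ⟨-, h1, h2, h3, h4⟩ := rev_pow_aux f.reverse h0 d
  have e2 : ((((d : ℤ) - 2) * (d.choose 2 : ℤ) : ℤ) : ZMod 2)
      = (d : ZMod 2) * (d.choose 2 : ZMod 2) := by
    have h2 : (2 : ZMod 2) = 0 := by decide
    push_cast
    rw [h2, sub_zero]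
  rw [e2, Tc_eq_rev 1 f (by omega), Tc_eq_rev 2 f (by omega), Tc_eq_rev 3 f (by omega),
    Tc_eq_rev 4 f (by omega), Tc_eq_rev 1 (f ^ d) (by omega), Tc_eq_rev 2 (f ^ d) (by omega),
    Tc_eq_rev 3 (f ^ d) (by omega), Tc_eq_rev 4 (f ^ d) (by omega), rev_pow]
  exact ⟨h1, h2, h3, h4⟩
end
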